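/- arXiv:2409.01678 — 4 statements merged into one kernel-verified Lean document; each statement's English description precedes it below -/
import Mathlib

section
/- For any three trees T_1, T_2, T_3 on n vertices each, there exists a planar graph on at most ⌊3n/2⌋ vertices containing each T_i as a subgraph. -/
open SimpleGraph

def HasMinor {V W : Type*} (G : SimpleGraph V) (H : SimpleGraph W) : Prop :=
  ∃ f : W → Set V,
    (∀ w, (f w).Nonempty) ∧
    (∀ w, (G.induce (f w)).Connected) ∧
    (Pairwise fun w₁ w₂ => Disjoint (f w₁) (f w₂)) ∧
    ∀ ⦃w₁ w₂⦄, H.Adj w₁ w₂ → ∃ a ∈ f w₁, ∃ b ∈ f w₂, G.Adj a b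

def IsPlanar {V : Type*} (G : SimpleGraph V) : Prop :=
  ¬ HasMinor G (completeGraph (Fin 5)) ∧
  ¬ HasMinor G (completeBipartiteGraph (Fin 3) (Fin 3))

def IsOuterplanar {V : Type*} (G : SimpleGraph V) : Prop :=
  ¬ HasMinor G (completeGraph (Fin 4)) ∧
  ¬ HasMinor G (completeBipartiteGraph (Fin 2) (Fin 3))

def Contains {V W : Type*} (G : SimpleGraph V) (H : SimpleGraph W) : Prop :=
  ∃ f : W ↪ V, ∀ ⦃a b⦄, H.Adj a b → G.Adj (f a) (f b)

/-- The caterpillar with spine a path on `k` vertices, each spine vertex having `m` leaves. -/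
def caterpillar (k m : ℕ) : SimpleGraph (Fin k ⊕ Fin k × Fin m) :=
  SimpleGraph.fromRel (fun a b =>
    match a, b with
    | Sum.inl i, Sum.inl j => (i : ℕ) + 1 = (j : ℕ)
    | Sum.inl i, Sum.inr p => i = p.1
    | _, _ => False)

/-- A mod 2 certificate of planarity. The function `b` plays the role of a linear order of the
vertices, placed in convex position, and the value `w u v x` records whether the drawing of the
edge `uv` is to be moved across the vertex `x`. Two disjoint edges `uv` and `xy` cross an even
number of times after these moves. -/
structure CrossingCertificate {V : Type*} (G : SimpleGraph V) (b : V → V → ZMod 2)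
    (w : V → V → V → ZMod 2) : Prop where
  add_swap : ∀ u v, u ≠ v → b u v + b v u = 1
  disjoint_edges : ∀ u v x y, G.Adj u v → G.Adj x y → u ≠ x → u ≠ y → v ≠ x → v ≠ y →
    w u v x + w u v y + w x y u + w x y v = b u x + b u y + b v x + b v y

/-- The sum of `w · · x` along the edges of a walk. -/
def walkSum {V : Type*} {G : SimpleGraph V} (w : V → V → V → ZMod 2) {u v : V}
    (p : G.Walk u v) (x : V) : ZMod 2 :=
  (p.darts.map fun d => w d.fst d.snd x).sum

@[simp]
lemma walkSum_nil {V : Type*} {G : SimpleGraph V} (w : V → V → V → ZMod 2) (u x : V) :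
    walkSum w (Walk.nil : G.Walk u u) x = 0 := by
  simp [walkSum]

@[simp]
lemma walkSum_cons {V : Type*} {G : SimpleGraph V} (w : V → V → V → ZMod 2) {u v t : V}
    (h : G.Adj u v) (p : G.Walk v t) (x : V) :
    walkSum w (Walk.cons h p) x = w u v x + walkSum w p x := by
  simp [walkSum]

namespace CrossingCertificate

variable {V : Type*} {G : SimpleGraph V} {b : V → V → ZMod 2} {w : V → V → V → ZMod 2}

lemma edge_walk (hG : CrossingCertificate G b w) {u v : V} (huv : G.Adj u v) {x y : V}
    (q : G.Walk x y) (hu : u ∉ q.support) (hv : v ∉ q.support) :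
    w u v x + w u v y + walkSum w q u + walkSum w q v = b u x + b u y + b v x + b v y := by
  induction q with
  | nil => simp only [walkSum_nil]; grind
  | @cons x z y h q ih =>
    simp only [Walk.support_cons, List.mem_cons, not_or] at hu hv
    have hz := q.start_mem_support
    have := ih hu.2 hv.2
    have := hG.disjoint_edges u v x z huv h hu.1 (fun e => hu.2 (e ▸ hz)) hv.1
      (fun e => hv.2 (e ▸ hz))
    simp only [walkSum_cons]
    grind

lemma walk_walk (hG : CrossingCertificate G b w) {u v : V} (p : G.Walk u v) {x y : V}
    (q : G.Walk x y) (hpq : ∀ z ∈ p.support, z ∉ q.support) :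
    walkSum w p x + walkSum w p y + walkSum w q u + walkSum w q v =
      b u x + b u y + b v x + b v y := by
  induction p with
  | nil => simp only [walkSum_nil]; grind
  | @cons u z v h p ih =>
    simp only [Walk.support_cons, List.mem_cons, forall_eq_or_imp] at hpq
    have := ih hpq.2
    have := hG.edge_walk h q hpq.1 (hpq.2 _ p.start_mem_support)
    simp only [walkSum_cons]
    grind

end CrossingCertificate

lemma exists_walk_of_induce_connected {V : Type*} {G : SimpleGraph V} {s : Set V}
    (hs : (G.induce s).Connected) {a b : V} (ha : a ∈ s) (hb : b ∈ s) :
    ∃ p : G.Walk a b, ∀ x ∈ p.support, x ∈ s := by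
  obtain ⟨p⟩ := hs.preconnected ⟨a, ha⟩ ⟨b, hb⟩
  let f : G.induce s →g G := ⟨Subtype.val, fun h => h⟩
  refine ⟨p.map f, fun x hx => ?_⟩
  rw [Walk.support_map, List.mem_map] at hx
  obtain ⟨y, -, rfl⟩ := hx
  exact y.2

/-- Crossing certificates are inherited by minors. -/
lemma CrossingCertificate.of_hasMinor {V W : Type*} {G : SimpleGraph V} {H : SimpleGraph W}
    {b : V → V → ZMod 2} {w : V → V → V → ZMod 2} (hG : CrossingCertificate G b w)
    (hH : HasMinor G H) : ∃ b' w', CrossingCertificate H b' w' := by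
  classical
  obtain ⟨f, hne, hconn, hdisj, hadj⟩ := hH
  choose r hr using hne
  have hsep : ∀ {i j x}, i ≠ j → x ∈ f i → x ∉ f j := fun hij hi hj =>
    Set.disjoint_left.1 (hdisj hij) hi hj
  have hwalk : ∀ i j, H.Adj i j →
      ∃ p : G.Walk (r i) (r j), ∀ x ∈ p.support, x ∈ f i ∨ x ∈ f j := by
    intro i j hij
    obtain ⟨a, ha, c, hc, hac⟩ := hadj hij
    obtain ⟨p, hp⟩ := exists_walk_of_induce_connected (hconn i) (hr i) ha
    obtain ⟨q, hq⟩ := exists_walk_of_induce_connected (hconn j) hc (hr j)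
    refine ⟨p.append (Walk.cons hac q), fun x hx => ?_⟩
    simp only [Walk.mem_support_append_iff, Walk.support_cons, List.mem_cons] at hx
    rcases hx with hx | rfl | hx
    exacts [.inl (hp x hx), .inl ha, .inr (hq x hx)]
  choose P hP using hwalk
  refine ⟨fun i j => b (r i) (r j),
    fun i j k => if h : H.Adj i j then walkSum w (P i j h) (r k) else 0, ?_, ?_⟩
  · exact fun i j hij => hG.add_swap _ _ fun e => hsep hij (hr i) (e ▸ hr j)
  · intro i j k l hij hkl hik hil hjk hjl
    simp only [hij, hkl, dif_pos]
    refine hG.walk_walk _ _ fun z hz hz' => ?_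
    rcases hP i j hij z hz with h | h <;> rcases hP k l hkl z hz' with h' | h'
    exacts [hsep hik h h', hsep hil h h', hsep hjk h h', hsep hjl h h']

lemma not_crossingCertificate_completeGraph_five (b : Fin 5 → Fin 5 → ZMod 2)
    (w : Fin 5 → Fin 5 → Fin 5 → ZMod 2) :
    ¬ CrossingCertificate (completeGraph (Fin 5)) b w := by
  rintro ⟨hb, hw⟩
  have e (u v x y : Fin 5) (h : u ≠ v ∧ x ≠ y ∧ u ≠ x ∧ u ≠ y ∧ v ≠ x ∧ v ≠ y) :=
    hw u v x y h.1 h.2.1 h.2.2.1 h.2.2.2.1 h.2.2.2.2.1 h.2.2.2.2.2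
  have := e 0 1 2 3 (by decide)
  have := e 0 1 2 4 (by decide)
  have := e 0 1 3 4 (by decide)
  have := e 0 2 1 3 (by decide)
  have := e 0 2 1 4 (by decide)
  have := e 0 2 3 4 (by decide)
  have := e 0 3 1 2 (by decide)
  have := e 0 3 1 4 (by decide)
  have := e 0 3 2 4 (by decide)
  have := e 0 4 1 2 (by decide)
  have := e 0 4 1 3 (by decide)
  have := e 0 4 2 3 (by decide)
  have := e 1 2 3 4 (by decide)
  have := e 1 3 2 4 (by decide)
  have := e 1 4 2 3 (by decide)
  have := hb 2 3 (by decide)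
  have := hb 2 4 (by decide)
  have := hb 3 4 (by decide)
  have := hb 1 3 (by decide)
  have := hb 1 4 (by decide)
  have := hb 1 2 (by decide)
  clear e hb hw
  grind

lemma not_crossingCertificate_completeBipartiteGraph_three_three
    (b : Fin 3 ⊕ Fin 3 → Fin 3 ⊕ Fin 3 → ZMod 2)
    (w : Fin 3 ⊕ Fin 3 → Fin 3 ⊕ Fin 3 → Fin 3 ⊕ Fin 3 → ZMod 2) :
    ¬ CrossingCertificate (completeBipartiteGraph (Fin 3) (Fin 3)) b w := by
  rintro ⟨hb, hw⟩
  have e (i j k l : Fin 3) (h : i ≠ k ∧ j ≠ l) :=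
    hw (.inl i) (.inr j) (.inl k) (.inr l) (by simp) (by simp) (by simpa using h.1) (by simp)
      (by simp) (by simpa using h.2)
  have := e 0 0 1 1 (by decide)
  have := e 0 0 1 2 (by decide)
  have := e 0 0 2 1 (by decide)
  have := e 0 0 2 2 (by decide)
  have := e 0 1 1 0 (by decide)
  have := e 0 1 1 2 (by decide)
  have := e 0 1 2 0 (by decide)
  have := e 0 1 2 2 (by decide)
  have := e 0 2 1 0 (by decide)
  have := e 0 2 1 1 (by decide)
  have := e 0 2 2 0 (by decide)
  have := e 0 2 2 1 (by decide)
  have := e 1 0 2 1 (by decide)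
  have := e 1 0 2 2 (by decide)
  have := e 1 1 2 0 (by decide)
  have := e 1 1 2 2 (by decide)
  have := e 1 2 2 0 (by decide)
  have := e 1 2 2 1 (by decide)
  have := hb (.inr 0) (.inr 1) (by simp)
  have := hb (.inr 0) (.inr 2) (by simp)
  have := hb (.inr 1) (.inr 2) (by simp)
  clear e hb hw
  grind

/-- A graph with a crossing certificate is planar. -/
lemma CrossingCertificate.isPlanar {V : Type*} {G : SimpleGraph V} {b : V → V → ZMod 2}
    {w : V → V → V → ZMod 2} (hG : CrossingCertificate G b w) : IsPlanar G := by
  constructor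
  · intro h
    obtain ⟨b', w', h'⟩ := hG.of_hasMinor h
    exact not_crossingCertificate_completeGraph_five _ _ h'
  · intro h
    obtain ⟨b', w', h'⟩ := hG.of_hasMinor h
    exact not_crossingCertificate_completeBipartiteGraph_three_three _ _ h'

/-- Placing the vertices on a line by `σ` gives a one-page book embedding of `G`. -/
def NonCrossing {V : Type*} (G : SimpleGraph V) (σ : V → ℕ) : Prop :=
  ∀ ⦃a b c d⦄, G.Adj a b → G.Adj c d → ¬ (σ a < σ c ∧ σ c < σ b ∧ σ b < σ d)

lemma SimpleGraph.IsTree.exists_injective_nonCrossing {V : Type*} [Fintype V]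
    {G : SimpleGraph V} (hG : G.IsTree) : ∃ σ : V → ℕ, σ.Injective ∧ NonCrossing G σ := by
  classical
  rcases subsingleton_or_nontrivial V with hV | hV
  · exact ⟨fun _ => 0, Function.injective_of_subsingleton _, by simp [NonCrossing]⟩
  obtain ⟨v, hv⟩ := hG.exists_vert_degree_one_of_nontrivial
  have hT : (G.induce ({v}ᶜ : Set V)).IsTree :=
    ⟨hG.connected.induce_compl_singleton_of_degree_eq_one hv, hG.isAcyclic.induce _⟩
  obtain ⟨u, hu, huniq⟩ := degree_eq_one_iff_existsUnique_adj.1 hv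
  obtain ⟨τ, hτ, hcross⟩ := SimpleGraph.IsTree.exists_injective_nonCrossing hT
  refine ⟨fun x => if h : x = v then 2 * τ ⟨u, hu.ne'⟩ + 1 else 2 * τ ⟨x, h⟩, ?_, ?_⟩
  · intro x y hxy
    by_cases hx : x = v <;> by_cases hy : y = v <;> simp only [hx, hy, dite_true, dite_false] at hxy
    · exact hx.trans hy.symm
    · omega
    · omega
    · exact congrArg Subtype.val (hτ (Nat.eq_of_mul_eq_mul_left two_pos hxy))
  · intro a b c d hab hcd
    by_cases ha : a = v
    · subst ha
      obtain rfl := huniq b hab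
      simp only [hab.ne', dite_true, dite_false]
      omega
    by_cases hb : b = v
    · subst hb
      obtain rfl := huniq a hab.symm
      by_cases hc : c = b <;> simp only [hc, ha, dite_true, dite_false] <;> omega
    by_cases hc : c = v
    · subst hc
      obtain rfl := huniq d hcd
      simp only [hcd.ne', hb, dite_true, dite_false]
      omega
    by_cases hd : d = v
    · subst hd
      obtain rfl := huniq c hcd.symm
      simp only [hb, hc, dite_true, dite_false]
      omega
    have := @hcross ⟨a, ha⟩ ⟨b, hb⟩ ⟨c, hc⟩ ⟨d, hd⟩ hab hcd
    simp only [ha, hb, hc, hd, dite_false]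
    omega
termination_by Nat.card V
decreasing_by exact Finite.card_subtype_lt (x := v) (by simp)

/-- Every tree on `n` vertices admits a one-page book embedding. -/
lemma SimpleGraph.IsTree.exists_nonCrossing_fin {n : ℕ} {T : SimpleGraph (Fin n)}
    (hT : T.IsTree) : ∃ σ : Fin n → Fin n, σ.Injective ∧ NonCrossing T fun v => (σ v : ℕ) := by
  obtain ⟨τ, hτ, hcross⟩ := hT.exists_injective_nonCrossing
  let e := (Finset.univ.image τ).orderIsoOfFin
    ((Finset.card_image_of_injective _ hτ).trans (Finset.card_fin n))
  have hlt : ∀ x y, e.symm ⟨τ x, Finset.mem_image_of_mem _ (Finset.mem_univ x)⟩ <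
      e.symm ⟨τ y, Finset.mem_image_of_mem _ (Finset.mem_univ y)⟩ ↔ τ x < τ y := fun x y => by
    rw [e.symm.lt_iff_lt, Subtype.mk_lt_mk]
  refine ⟨fun x => e.symm ⟨τ x, Finset.mem_image_of_mem _ (Finset.mem_univ x)⟩,
    fun x y hxy => hτ (by simpa using hxy), fun a b c d hab hcd => ?_⟩
  simp only [Fin.val_fin_lt, hlt]
  exact hcross hab hcd

/-- The indicator of `i < j` modulo 2. -/
def ltParity (i j : ℕ) : ZMod 2 := if i < j then 1 else 0

lemma ltParity_add_swap {i j : ℕ} (h : i ≠ j) : ltParity i j + ltParity j i = 1 := by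
  rcases h.lt_or_gt with h | h <;> simp [ltParity, h, h.not_gt]

lemma NonCrossing.ltParity_sum {V : Type*} {G : SimpleGraph V} {σ : V → ℕ}
    (hσ : σ.Injective) (hG : NonCrossing G σ) {u v x y : V} (huv : G.Adj u v) (hxy : G.Adj x y)
    (hux : u ≠ x) (huy : u ≠ y) (hvx : v ≠ x) (hvy : v ≠ y) :
    ltParity (σ u) (σ x) + ltParity (σ u) (σ y) + ltParity (σ v) (σ x) +
      ltParity (σ v) (σ y) = 0 := by
  have := hσ.ne hux
  have := hσ.ne huy
  have := hσ.ne hvx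
  have := hσ.ne hvy
  have := hG huv hxy
  have := hG huv hxy.symm
  have := hG huv.symm hxy
  have := hG huv.symm hxy.symm
  have := hG hxy huv
  have := hG hxy huv.symm
  have := hG hxy.symm huv
  have := hG hxy.symm huv.symm
  unfold ltParity
  split_ifs <;> first | rfl | omega

lemma NonCrossing.map {V W : Type*} {G : SimpleGraph V} {σ : V → ℕ} (hG : NonCrossing G σ)
    (e : V ↪ W) {π : W → ℕ} (h : ∀ u v, π (e u) < π (e v) → σ u < σ v) :
    NonCrossing (G.map e) π := by
  intro a b c d hab hcd
  obtain ⟨a, b, hab', rfl, rfl⟩ := (map_adj e G _ _).1 hab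
  obtain ⟨c, d, hcd', rfl, rfl⟩ := (map_adj e G _ _).1 hcd
  exact fun H => hG hab' hcd' ⟨h _ _ H.1, h _ _ H.2.1, h _ _ H.2.2⟩

/-- The involution of `ℕ` that reverses the interval from `m` to `n - 1`. -/
def reverseIco (m n i : ℕ) : ℕ := if m ≤ i ∧ i < n then m + n - 1 - i else i

lemma reverseIco_involutive (m n : ℕ) : (reverseIco m n).Involutive := by
  intro i
  unfold reverseIco
  split_ifs <;> omega

lemma reverseIco_lt {m n i : ℕ} (hi : i < n) : reverseIco m n i < n := by
  unfold reverseIco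
  split_ifs <;> omega

lemma ltParity_reverseIco {m n i j : ℕ} (hi : i < n) (hj : j < n) (hij : i ≠ j) :
    (if j < m then ltParity i j else 0) + (if i < m then ltParity j i else 0) + ltParity i j =
      1 + ltParity i m + ltParity j m + ltParity (reverseIco m n i) (reverseIco m n j) := by
  unfold ltParity reverseIco
  split_ifs <;> first | rfl | omega

/-- Let three pages have vertex orders `A⁻ B`, `C⁻ B` and `C⁻ A` respectively, where `A`, `B` and
`C` lie on three rays and `⁻` denotes reversal. If each page is drawn without crossings, then the
union of the pages is planar. The positions are counted along `C⁻ A⁻ B`, with `C` below `m`, and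
the last position of `A` also belongs to the second page if `n = 2 * m + 1`. -/
lemma crossingCertificate_of_pages {V : Type*} {G₁ G₂ G₃ : SimpleGraph V} {m n : ℕ}
    (hm : 2 * m ≤ n) (hm' : n ≤ 2 * m + 1) {π : V → ℕ} (hπ : π.Injective)
    (h₁ : ∀ u v, G₁.Adj u v → m ≤ π u)
    (hc₁ : NonCrossing G₁ π)
    (h₂ : ∀ u v, G₂.Adj u v → π u < m ∨ 2 * m ≤ π u)
    (hc₂ : NonCrossing G₂ π)
    (h₃ : ∀ u v, G₃.Adj u v → π u < n)
    (hc₃ : NonCrossing G₃ fun v => reverseIco m n (π v)) :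
    ∃ b w, CrossingCertificate (G₁ ⊔ G₂ ⊔ G₃) b w := by
  classical
  refine ⟨fun u v => ltParity (π u) (π v), fun u v x =>
    if G₁.Adj u v then ltParity (π u) (π x) + ltParity (π v) (π x)
    else if G₃.Adj u v ∧ π x < m then ltParity (π u) (π x) + ltParity (π v) (π x) else 0,
    fun u v huv => ltParity_add_swap (hπ.ne huv), ?_⟩
  intro u v x y huv hxy hux huy hvx hvy
  have sux := ltParity_add_swap (hπ.ne hux)
  have suy := ltParity_add_swap (hπ.ne huy)
  have svx := ltParity_add_swap (hπ.ne hvx)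
  have svy := ltParity_add_swap (hπ.ne hvy)
  have mixed : ∀ {u v x y}, G₃.Adj u v → G₂.Adj x y → u ≠ x → v ≠ x →
      (if π x < m then ltParity (π u) (π x) + ltParity (π v) (π x) else 0) =
        ltParity (π u) (π x) + ltParity (π v) (π x) := by
    intro u v x y huv hxy hux hvx
    split_ifs with hx
    · rfl
    · have := h₂ x y hxy
      have := h₃ u v huv
      have := h₃ v u huv.symm
      have := hπ.ne hux
      have := hπ.ne hvx
      rw [ltParity, ltParity, if_pos (by omega), if_pos (by omega)]
      rfl
  simp only [sup_adj] at huv hxy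
  by_cases huv₁ : G₁.Adj u v <;> by_cases hxy₁ : G₁.Adj x y <;>
    simp only [huv₁, hxy₁, if_true, if_false, true_or, false_or] at huv hxy ⊢
  · have := hc₁.ltParity_sum hπ huv₁ hxy₁ hux huy hvx hvy
    grind
  · simp only [(h₁ u v huv₁).not_gt, (h₁ v u huv₁.symm).not_gt, and_false, if_false]
    grind
  · simp only [(h₁ x y hxy₁).not_gt, (h₁ y x hxy₁.symm).not_gt, and_false, if_false]
    grind
  · by_cases huv₃ : G₃.Adj u v <;> by_cases hxy₃ : G₃.Adj x y <;>
      simp only [huv₃, hxy₃, true_and, false_and, if_false, or_false] at huv hxy ⊢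
    · have hu := h₃ u v huv₃
      have hv := h₃ v u huv₃.symm
      have hx := h₃ x y hxy₃
      have hy := h₃ y x hxy₃.symm
      have := hc₃.ltParity_sum ((reverseIco_involutive m n).injective.comp hπ) huv₃ hxy₃
        hux huy hvx hvy
      have rux := ltParity_reverseIco (m := m) hu hx (hπ.ne hux)
      have ruy := ltParity_reverseIco (m := m) hu hy (hπ.ne huy)
      have rvx := ltParity_reverseIco (m := m) hv hx (hπ.ne hvx)
      have rvy := ltParity_reverseIco (m := m) hv hy (hπ.ne hvy)
      clear mixed h₁ h₂ h₃ hc₁ hc₂ hc₃ hu hv hx hy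
      have split : ∀ {p : Prop} [Decidable p] (s t : ZMod 2),
          (if p then s + t else 0) = (if p then s else 0) + if p then t else 0 :=
        fun s t => by split_ifs <;> simp
      simp only [split]
      grind -splitIte
    · rw [mixed huv₃ hxy hux hvx, mixed huv₃ hxy.symm huy hvy]
      grind
    · rw [mixed hxy₃ huv hux.symm huy.symm, mixed hxy₃ huv.symm hvx.symm hvy.symm]
      grind
    · have := hc₂.ltParity_sum hπ huv hxy hux huy hvx hvy
      grind

/-- For any three trees on `n` vertices each, there is a planar graph on at most `⌊3n/2⌋`
vertices containing each of them as a subgraph. -/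
theorem three_trees_in_planar_graph (n : ℕ) (hn : 1 ≤ n)
    (T₁ T₂ T₃ : SimpleGraph (Fin n)) (h₁ : T₁.IsTree) (h₂ : T₂.IsTree) (h₃ : T₃.IsTree) :
    ∃ (V : Type) (_ : Fintype V) (G : SimpleGraph V),
      Fintype.card V ≤ 3 * n / 2 ∧ IsPlanar G ∧
      Contains G T₁ ∧ Contains G T₂ ∧ Contains G T₃ := by
  obtain ⟨σ₁, hσ₁, hc₁⟩ := h₁.exists_nonCrossing_fin
  obtain ⟨σ₂, hσ₂, hc₂⟩ := h₂.exists_nonCrossing_fin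
  obtain ⟨σ₃, hσ₃, hc₃⟩ := h₃.exists_nonCrossing_fin
  obtain ⟨m, hm⟩ : ∃ m, m = n / 2 := ⟨_, rfl⟩
  let e₁ : Fin n ↪ Fin (n + m) := ⟨fun v => ⟨m + σ₁ v, by omega⟩, fun u v h => hσ₁ <| by
    simpa [Fin.ext_iff] using h⟩
  let e₂ : Fin n ↪ Fin (n + m) :=
    ⟨fun v => ⟨if (σ₂ v : ℕ) < m then σ₂ v else σ₂ v + m, by split_ifs <;> omega⟩,
      fun u v h => hσ₂ <| by
        simp only [Fin.mk.injEq] at h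
        ext
        split_ifs at h <;> omega⟩
  let e₃ : Fin n ↪ Fin (n + m) :=
    ⟨fun v => ⟨reverseIco m n (σ₃ v), by have := reverseIco_lt (m := m) (σ₃ v).2; omega⟩,
      fun u v h => hσ₃ (Fin.ext ((reverseIco_involutive m n).injective (Fin.mk.inj h)))⟩
  have he₂ : ∀ v, (e₂ v : ℕ) = if (σ₂ v : ℕ) < m then (σ₂ v : ℕ) else σ₂ v + m := fun _ => rfl
  have he₃ : ∀ v, (e₃ v : ℕ) = reverseIco m n (σ₃ v) := fun _ => rfl
  have hplanar : ∃ b w, CrossingCertificate (T₁.map e₁ ⊔ T₂.map e₂ ⊔ T₃.map e₃) b w := by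
    refine crossingCertificate_of_pages (m := m) (n := n) (by omega) (by omega)
      Fin.val_injective ?_ (hc₁.map e₁ fun u v h => ?_) ?_ (hc₂.map e₂ fun u v h => ?_) ?_
      (hc₃.map e₃ fun u v h => ?_)
    · intro u v h
      obtain ⟨u, v, -, rfl, rfl⟩ := (map_adj _ _ _ _).1 h
      exact Nat.le_add_right _ _
    · exact Nat.lt_of_add_lt_add_left h
    · intro u v h
      obtain ⟨u, v, -, rfl, rfl⟩ := (map_adj _ _ _ _).1 h
      rw [he₂]
      split_ifs <;> omega
    · rw [he₂, he₂] at h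
      split_ifs at h <;> omega
    · intro u v h
      obtain ⟨u, v, -, rfl, rfl⟩ := (map_adj _ _ _ _).1 h
      exact reverseIco_lt (σ₃ u).2
    · simpa only [he₃, reverseIco_involutive m n _] using h
  obtain ⟨b, w, h⟩ := hplanar
  refine ⟨Fin (n + m), inferInstance, _, ?_, h.isPlanar, ⟨e₁, fun a b h => ?_⟩,
    ⟨e₂, fun a b h => ?_⟩, ⟨e₃, fun a b h => ?_⟩⟩
  · rw [Fintype.card_fin]
    omega
  · exact .inl (.inl (map_adj_apply.2 h))
  · exact .inl (.inr (map_adj_apply.2 h))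
  · exact .inr (map_adj_apply.2 h)
end

section
/- Any outerplanar graph that contains every n-vertex outerplanar graph as a subgraph has at least √2^{n−5} vertices, for n ≥ 6. -/
open SimpleGraph

/-- A connected vertex set meeting both `S` and its complement spans an edge leaving `S`. -/
lemma exists_adj_mem_notMem_of_connected {V : Type*} {G : SimpleGraph V} {A : Set V}
    (hA : (G.induce A).Connected) (S : Set V) {x y : V} (hx : x ∈ A) (hy : y ∈ A)
    (hxS : x ∈ S) (hyS : y ∉ S) :
    ∃ u ∈ A, ∃ v ∈ A, u ∈ S ∧ v ∉ S ∧ G.Adj u v := by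
  obtain ⟨p⟩ := hA.preconnected ⟨x, hx⟩ ⟨y, hy⟩
  obtain ⟨d, -, h1, h2⟩ := p.exists_boundary_dart {z | (z : V) ∈ S} hxS hyS
  exact ⟨d.fst, d.fst.2, d.snd, d.snd.2, h1, h2, d.adj⟩

/-- A vertex set is connected if every vertex other than a root has a neighbour in the set
that is smaller with respect to some rank. -/
lemma connected_induce_of_descent {V : Type*} {G : SimpleGraph V} {A : Set V} (μ : V → ℕ)
    {r : V} (hr : r ∈ A) (h : ∀ x ∈ A, x ≠ r → ∃ y ∈ A, G.Adj x y ∧ μ y < μ x) :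
    (G.induce A).Connected := by
  rw [connected_iff_exists_forall_reachable]
  refine ⟨⟨r, hr⟩, ?_⟩
  suffices key : ∀ m, ∀ x (hx : x ∈ A), μ x = m →
      (G.induce A).Reachable ⟨r, hr⟩ ⟨x, hx⟩ from fun w => key _ w.1 w.2 rfl
  intro m
  induction m using Nat.strong_induction_on with
  | _ m ih =>
    intro x hx hm
    by_cases hxr : x = r
    · subst hxr
      exact Reachable.refl _
    · obtain ⟨y, hy, hxy, hlt⟩ := h x hx hxr
      refine (ih (μ y) (hm ▸ hlt) y hy rfl).trans (Adj.reachable ?_)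
      exact hxy.symm

lemma connected_induce_image {V W : Type*} {G : SimpleGraph V} {H : SimpleGraph W} {f : W → V}
    (hf : ∀ ⦃a b⦄, H.Adj a b → G.Adj (f a) (f b)) {A : Set W} (hA : (H.induce A).Connected) :
    (G.induce (f '' A)).Connected := by
  let φ : H.induce A →g G.induce (f '' A) :=
    { toFun := fun x => ⟨f x, x, x.2, rfl⟩
      map_rel' := fun h => hf h }
  refine hA.map φ ?_
  rintro ⟨_, x, hx, rfl⟩
  exact ⟨⟨x, hx⟩, rfl⟩

/-- A maximal connected subset: the connected set `B` inside `S` extends to a connected subset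
of `S` with no edges to the rest of `S`. -/
lemma exists_connected_closed_superset {V : Type*} [Finite V] {G : SimpleGraph V} {B S : Set V}
    (hB : (G.induce B).Connected) (hBS : B ⊆ S) :
    ∃ Y, B ⊆ Y ∧ Y ⊆ S ∧ (G.induce Y).Connected ∧ ∀ u ∈ Y, ∀ v ∈ S, G.Adj u v → v ∈ Y := by
  obtain ⟨Y, hBY, hY⟩ := (Set.toFinite {Y : Set V | Y ⊆ S ∧ (G.induce Y).Connected}).exists_le_maximal
    (a := B) ⟨hBS, hB⟩
  refine ⟨Y, hBY, hY.prop.1, hY.prop.2, fun u hu v hv huv => ?_⟩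
  refine hY.le_of_ge (y := Y ∪ {v}) ⟨?_, ?_⟩ Set.subset_union_left (Or.inr rfl)
  · exact Set.union_subset hY.prop.1 (by simpa using hv)
  · refine connected_induce_union hY.prop.2.preconnected ?_ hu rfl huv
    exact (connected_top (V := ({v} : Set V))).preconnected.mono (by simp)

/-- In a graph drawn without crossings on points of a line (with edges as arcs above it),
two disjoint connected vertex sets do not cross. -/
lemma not_alternating_of_connected {V : Type*} {G : SimpleGraph V} {pos : V → ℤ}
    (hinj : Function.Injective pos)
    (hnc : ∀ u v x y, G.Adj u v → G.Adj x y → ¬(pos u < pos x ∧ pos x < pos v ∧ pos v < pos y))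
    {A B : Set V} (hA : (G.induce A).Connected) (hB : (G.induce B).Connected)
    (hAB : Disjoint A B) {a₁ a₂ b₁ b₂ : V} (ha₁ : a₁ ∈ A) (ha₂ : a₂ ∈ A) (hb₁ : b₁ ∈ B)
    (hb₂ : b₂ ∈ B) : ¬(pos a₁ < pos b₁ ∧ pos b₁ < pos a₂ ∧ pos a₂ < pos b₂) := by
  rintro ⟨h1, h2, h3⟩
  have hne : ∀ a ∈ A, ∀ b ∈ B, pos a ≠ pos b := fun a ha b hb h =>
    Set.disjoint_left.1 hAB ha (hinj h ▸ hb)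
  obtain ⟨u, hu, v, hv, huS, hvS, huv⟩ := exists_adj_mem_notMem_of_connected hA
    {z | pos b₁ < pos z ∧ pos z < pos b₂} ha₂ ha₁ ⟨h2, h3⟩ (fun h => by have := h.1; omega)
  simp only [Set.mem_ofPred_eq] at huS hvS
  have hv1 := hne v hv b₁ hb₁
  have hv2 := hne v hv b₂ hb₂
  rcases lt_or_gt_of_ne hv1 with hlt | hgt
  · obtain ⟨x, hx, y, hy, hxS, hyS, hxy⟩ := exists_adj_mem_notMem_of_connected hB
      {z | pos v < pos z ∧ pos z < pos u} hb₁ hb₂ ⟨hlt, huS.1⟩ (fun h => by have := h.2; omega)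
    simp only [Set.mem_ofPred_eq] at hxS hyS
    have hy1 := hne u hu y hy
    have hy2 := hne v hv y hy
    have := hnc v u x y huv.symm hxy
    have := hnc y x v u hxy.symm huv.symm
    omega
  · obtain ⟨x, hx, y, hy, hxS, hyS, hxy⟩ := exists_adj_mem_notMem_of_connected hB
      {z | pos u < pos z ∧ pos z < pos v} hb₂ hb₁ ⟨huS.2, by omega⟩
      (fun h => by have := h.1; omega)
    simp only [Set.mem_ofPred_eq] at hxS hyS
    have hy1 := hne u hu y hy
    have hy2 := hne v hv y hy
    have := hnc u v x y huv hxy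
    have := hnc y x u v hxy.symm huv
    omega

/-- A graph drawn without crossings on points of a line is outerplanar. -/
lemma isOuterplanar_of_noncrossing {V : Type*} {G : SimpleGraph V} {pos : V → ℤ}
    (hinj : Function.Injective pos)
    (hnc : ∀ u v x y, G.Adj u v → G.Adj x y →
      ¬(pos u < pos x ∧ pos x < pos v ∧ pos v < pos y)) : IsOuterplanar G := by
  constructor
  · rintro ⟨f, hne, hconn, hdisj, hadj⟩
    choose r hr using hne
    have hunion : ∀ i j, i ≠ j → (G.induce (f i ∪ f j)).Connected := by
      intro i j hij
      obtain ⟨a, ha, b, hb, hab⟩ := hadj (w₁ := i) (w₂ := j) hij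
      exact connected_induce_union (hconn i).preconnected (hconn j).preconnected ha hb hab
    have hrinj : Function.Injective (pos ∘ r) := by
      refine hinj.comp fun i j hij => ?_
      by_contra h
      exact Set.disjoint_left.1 (hdisj h) (hr i) (hij ▸ hr j)
    set σ := Tuple.sort (pos ∘ r)
    have hmono : StrictMono ((pos ∘ r) ∘ σ) :=
      (Tuple.monotone_sort (pos ∘ r)).strictMono_of_injective (hrinj.comp σ.injective)
    refine not_alternating_of_connected hinj hnc
      (hunion (σ 0) (σ 2) (σ.injective.ne (by decide)))
      (hunion (σ 1) (σ 3) (σ.injective.ne (by decide))) ?_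
      (Or.inl (hr (σ 0))) (Or.inr (hr (σ 2))) (Or.inl (hr (σ 1))) (Or.inr (hr (σ 3)))
      ⟨hmono (by decide), hmono (by decide), hmono (by decide)⟩
    simp only [Set.disjoint_union_left, Set.disjoint_union_right]
    refine ⟨⟨?_, ?_⟩, ?_, ?_⟩ <;> exact hdisj (σ.injective.ne (by decide))
  · rintro ⟨f, hne, hconn, hdisj, hadj⟩
    choose r hr using hne
    have hunion : ∀ i j, (G.induce (f (Sum.inl i) ∪ f (Sum.inr j))).Connected := by
      intro i j
      obtain ⟨a, ha, b, hb, hab⟩ := hadj (w₁ := Sum.inl i) (w₂ := Sum.inr j) (by simp)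
      exact connected_induce_union (hconn _).preconnected (hconn _).preconnected ha hb hab
    have hrne : ∀ v w, v ≠ w → pos (r v) ≠ pos (r w) := by
      intro v w h hpos
      exact Set.disjoint_left.1 (hdisj h) (hr v) (hinj hpos ▸ hr w)
    have hd : ∀ i j, i ≠ j → Disjoint (f (Sum.inl 0) ∪ f (Sum.inr i))
        (f (Sum.inl 1) ∪ f (Sum.inr j)) := by
      intro i j hij
      simp only [Set.disjoint_union_left, Set.disjoint_union_right]
      refine ⟨⟨?_, ?_⟩, ?_, ?_⟩ <;> apply hdisj <;> simp [hij]
    set p := r (Sum.inl 0)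
    set q := r (Sum.inl 1)
    let side : Fin 3 → Prop := fun i =>
      (pos p < pos (r (Sum.inr i)) ∧ pos (r (Sum.inr i)) < pos q) ∨
      (pos q < pos (r (Sum.inr i)) ∧ pos (r (Sum.inr i)) < pos p)
    obtain ⟨i, j, hij, hside⟩ : ∃ i j, i ≠ j ∧ (side i ↔ side j) := by
      by_cases h0 : side 0 <;> by_cases h1 : side 1 <;> by_cases h2 : side 2
      all_goals first
        | exact ⟨0, 1, by decide, iff_of_true h0 h1⟩
        | exact ⟨0, 1, by decide, iff_of_false h0 h1⟩
        | exact ⟨0, 2, by decide, iff_of_true h0 h2⟩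
        | exact ⟨0, 2, by decide, iff_of_false h0 h2⟩
        | exact ⟨1, 2, by decide, iff_of_true h1 h2⟩
        | exact ⟨1, 2, by decide, iff_of_false h1 h2⟩
    have hcross : ∀ i j, i ≠ j → ∀ a ∈ ({p, r (Sum.inr i)} : Set V), ∀ a' ∈ ({p, r (Sum.inr i)} : Set V),
        ∀ b ∈ ({q, r (Sum.inr j)} : Set V), ∀ b' ∈ ({q, r (Sum.inr j)} : Set V),
        ¬(pos a < pos b ∧ pos b < pos a' ∧ pos a' < pos b') ∧
        ¬(pos b < pos a ∧ pos a < pos b' ∧ pos b' < pos a') := by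
      intro i j hij a ha a' ha' b hb b' hb'
      have hp : ∀ a ∈ ({p, r (Sum.inr i)} : Set V), a ∈ f (Sum.inl 0) ∪ f (Sum.inr i) := by
        rintro _ (rfl | rfl)
        exacts [Or.inl (hr _), Or.inr (hr _)]
      have hq : ∀ a ∈ ({q, r (Sum.inr j)} : Set V), a ∈ f (Sum.inl 1) ∪ f (Sum.inr j) := by
        rintro _ (rfl | rfl)
        exacts [Or.inl (hr _), Or.inr (hr _)]
      exact ⟨not_alternating_of_connected hinj hnc (hunion 0 i) (hunion 1 j) (hd i j hij)
          (hp a ha) (hp a' ha') (hq b hb) (hq b' hb'),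
        not_alternating_of_connected hinj hnc (hunion 1 j) (hunion 0 i) (hd i j hij).symm
          (hq b hb) (hq b' hb') (hp a ha) (hp a' ha')⟩
    have hc : ∀ i j, i ≠ j →
        (¬(pos p < pos q ∧ pos q < pos (r (Sum.inr i)) ∧
            pos (r (Sum.inr i)) < pos (r (Sum.inr j))) ∧
          ¬(pos q < pos p ∧ pos p < pos (r (Sum.inr j)) ∧
            pos (r (Sum.inr j)) < pos (r (Sum.inr i)))) ∧
        (¬(pos p < pos (r (Sum.inr j)) ∧ pos (r (Sum.inr j)) < pos (r (Sum.inr i)) ∧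
            pos (r (Sum.inr i)) < pos q) ∧
          ¬(pos (r (Sum.inr j)) < pos p ∧ pos p < pos q ∧ pos q < pos (r (Sum.inr i)))) ∧
        (¬(pos (r (Sum.inr i)) < pos q ∧ pos q < pos p ∧ pos p < pos (r (Sum.inr j))) ∧
          ¬(pos q < pos (r (Sum.inr i)) ∧ pos (r (Sum.inr i)) < pos (r (Sum.inr j)) ∧
            pos (r (Sum.inr j)) < pos p)) ∧
        ¬(pos (r (Sum.inr i)) < pos (r (Sum.inr j)) ∧ pos (r (Sum.inr j)) < pos p ∧
            pos p < pos q) ∧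
          ¬(pos (r (Sum.inr j)) < pos (r (Sum.inr i)) ∧ pos (r (Sum.inr i)) < pos q ∧
            pos q < pos p) := by
      intro i j hij
      exact ⟨hcross i j hij p (by simp) (r (Sum.inr i)) (by simp) q (by simp) (r (Sum.inr j)) (by simp),
        hcross i j hij p (by simp) (r (Sum.inr i)) (by simp) (r (Sum.inr j)) (by simp) q (by simp),
        hcross i j hij (r (Sum.inr i)) (by simp) p (by simp) q (by simp) (r (Sum.inr j)) (by simp),
        hcross i j hij (r (Sum.inr i)) (by simp) p (by simp) (r (Sum.inr j)) (by simp) q (by simp)⟩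
    have h1 := hc i j hij
    have h2 := hc j i hij.symm
    have e1 := hrne (Sum.inl 0) (Sum.inl 1) (by simp)
    have e2 := hrne (Sum.inl 0) (Sum.inr i) (by simp)
    have e3 := hrne (Sum.inl 0) (Sum.inr j) (by simp)
    have e4 := hrne (Sum.inl 1) (Sum.inr i) (by simp)
    have e5 := hrne (Sum.inl 1) (Sum.inr j) (by simp)
    have e6 := hrne (Sum.inr i) (Sum.inr j) (by simpa using hij)
    clear hc hcross
    simp only [side] at hside
    change pos p ≠ pos q at e1
    change pos p ≠ _ at e2
    change pos p ≠ _ at e3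
    change pos q ≠ _ at e4
    change pos q ≠ _ at e5
    generalize pos p = P at *
    generalize pos q = Q at *
    generalize pos (r (Sum.inr i)) = X at *
    generalize pos (r (Sum.inr j)) = Y at *
    grind

lemma hasMinor_completeGraph_four {V : Type*} {G : SimpleGraph V} {X Y : Set V} {a b : V}
    (hX : (G.induce X).Connected) (hY : (G.induce Y).Connected) (hXY : Disjoint X Y)
    (haX : a ∉ X) (haY : a ∉ Y) (hbX : b ∉ X) (hbY : b ∉ Y) (hab : G.Adj a b)
    (adjXY : ∃ x ∈ X, ∃ y ∈ Y, G.Adj x y) (adjXa : ∃ x ∈ X, G.Adj x a)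
    (adjXb : ∃ x ∈ X, G.Adj x b) (adjYa : ∃ y ∈ Y, G.Adj y a) (adjYb : ∃ y ∈ Y, G.Adj y b) :
    HasMinor G (completeGraph (Fin 4)) := by
  have hsingle : ∀ v : V, (G.induce ({v} : Set V)).Connected := fun v =>
    connected_induce_of_descent (fun _ => 0) (r := v) rfl fun x hx h => (h hx).elim
  have hneX : X.Nonempty := let ⟨x, hx, _⟩ := adjXa; ⟨x, hx⟩
  have hneY : Y.Nonempty := let ⟨y, hy, _⟩ := adjYa; ⟨y, hy⟩
  obtain ⟨x, hx, y, hy, hxy⟩ := adjXY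
  obtain ⟨x₁, hx₁, hxa⟩ := adjXa
  obtain ⟨x₂, hx₂, hxb⟩ := adjXb
  obtain ⟨y₁, hy₁, hya⟩ := adjYa
  obtain ⟨y₂, hy₂, hyb⟩ := adjYb
  have hne := hab.ne
  refine ⟨![X, Y, {a}, {b}], ?_, ?_, ?_, ?_⟩
  · intro w
    fin_cases w
    exacts [hneX, hneY, ⟨a, rfl⟩, ⟨b, rfl⟩]
  · intro w
    fin_cases w
    exacts [hX, hY, hsingle a, hsingle b]
  · intro v w h
    fin_cases v <;> fin_cases w <;>
      simp [hXY, hXY.symm, haX, haY, hbX, hbY, hne, hne.symm] at h ⊢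
  · intro v w h
    fin_cases v <;> fin_cases w
    exacts [(h rfl).elim, ⟨x, hx, y, hy, hxy⟩, ⟨x₁, hx₁, a, rfl, hxa⟩, ⟨x₂, hx₂, b, rfl, hxb⟩,
      ⟨y, hy, x, hx, hxy.symm⟩, (h rfl).elim, ⟨y₁, hy₁, a, rfl, hya⟩, ⟨y₂, hy₂, b, rfl, hyb⟩,
      ⟨a, rfl, x₁, hx₁, hxa.symm⟩, ⟨a, rfl, y₁, hy₁, hya.symm⟩, (h rfl).elim, ⟨a, rfl, b, rfl, hab⟩,
      ⟨b, rfl, x₂, hx₂, hxb.symm⟩, ⟨b, rfl, y₂, hy₂, hyb.symm⟩, ⟨b, rfl, a, rfl, hab.symm⟩,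
      (h rfl).elim]

/-- The triangulated strip whose vertices `0, 1, …, n - 1`, added in this order, lie on the side
of the strip given by `c`: each vertex is joined to all later ones up to and including the next
vertex on its own side. -/
def stripGraph (n : ℕ) (c : ℕ → Bool) : SimpleGraph (Fin n) :=
  SimpleGraph.fromRel fun i j => i < j ∧ ∀ k : ℕ, (i : ℕ) < k → k < j → c k ≠ c i

lemma stripGraph_adj_of_lt {n : ℕ} {c : ℕ → Bool} {i j : Fin n} (h : (i : ℕ) < j) :
    (stripGraph n c).Adj i j ↔ ∀ k : ℕ, (i : ℕ) < k → k < j → c k ≠ c i := by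
  have h' : i < j := h
  simp [stripGraph, h', h'.ne, h'.not_gt]

lemma stripGraph_adj_of_succ {n : ℕ} {c : ℕ → Bool} {i j : Fin n} (h : (i : ℕ) + 1 = j) :
    (stripGraph n c).Adj i j :=
  (stripGraph_adj_of_lt (by omega)).2 fun k h1 h2 => by omega

lemma isOuterplanar_stripGraph (n : ℕ) (c : ℕ → Bool) : IsOuterplanar (stripGraph n c) := by
  refine isOuterplanar_of_noncrossing
    (pos := fun i : Fin n => if c i then (i : ℤ) - n else n - (i : ℤ)) ?_ ?_
  · intro i j hij
    have := i.2
    have := j.2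
    ext
    dsimp only at hij
    split_ifs at hij <;> omega
  · intro u v x y huv hxy
    have hu := u.2
    have hv := v.2
    have hx := x.2
    have hy := y.2
    simp only [stripGraph, fromRel_adj, Fin.lt_def] at huv hxy
    obtain ⟨-, huv⟩ := huv
    obtain ⟨-, hxy⟩ := hxy
    generalize (u : ℕ) = u at *
    generalize (v : ℕ) = v at *
    generalize (x : ℕ) = x at *
    generalize (y : ℕ) = y at *
    rintro ⟨h1, h2, h3⟩
    have key : ∀ s t, (s < t ∧ ∀ k, s < k → k < t → c k ≠ c s) →
      ∀ k, c k = c s → ¬ (s < k ∧ k < t) := fun s t h k hk hs => h.2 k hs.1 hs.2 hk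
    cases hcu : c u <;> cases hcv : c v <;> cases hcx : c x <;> cases hcy : c y <;>
      simp only [hcu, hcv, hcx, hcy, if_true, if_false, Bool.false_eq_true] at h1 h2 h3 <;>
      grind

/-- Before each vertex `k ≥ 2` there is a last vertex on either side of the strip. -/
lemma exists_last_before {c : ℕ → Bool} (hc : c 0 ≠ c 1) {k : ℕ} (hk : 2 ≤ k) (b : Bool) :
    ∃ m < k, c m = b ∧ ∀ l, m < l → l < k → c l ≠ b := by
  induction k, hk using Nat.le_induction with
  | base =>
    by_cases h : c 1 = b
    · exact ⟨1, by omega, h, fun l _ _ => by omega⟩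
    · refine ⟨0, by omega, ?_, fun l h1 h2 => ?_⟩
      · cases h0 : c 0 <;> cases h1 : c 1 <;> cases b <;> simp_all
      · obtain rfl : l = 1 := by omega
        exact h
  | succ k hk ih =>
    by_cases h : c k = b
    · exact ⟨k, by omega, h, fun l _ _ => by omega⟩
    · obtain ⟨m, hm, hmb, hl⟩ := ih
      refine ⟨m, by omega, hmb, fun l h1 h2 => ?_⟩
      rcases Nat.lt_succ_iff_lt_or_eq.1 h2 with h2 | rfl
      exacts [hl l h1 h2, h]

/-- Each vertex `k ≥ 2` is joined to an earlier vertex on the other side of the strip. -/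
lemma exists_diagonal_before {c : ℕ → Bool} (hc : c 0 ≠ c 1) (hc2 : c 2 = c 0) {k : ℕ}
    (hk : 2 ≤ k) : ∃ m < k, 1 ≤ m ∧ c m ≠ c k ∧ ∀ l, m < l → l < k → c l ≠ c m := by
  obtain ⟨m, hm, hmb, hl⟩ := exists_last_before hc hk (!c k)
  have hmk : c m ≠ c k := by simp [hmb]
  refine ⟨m, hm, ?_, hmk, by simpa only [hmb] using hl⟩
  by_contra hm0
  obtain rfl : m = 0 := by omega
  by_cases h2k : 2 < k
  · exact hl 2 (by omega) h2k (hc2.trans hmb)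
  · obtain rfl : k = 2 := by omega
    exact hmk hc2.symm

/-- Deleting one vertex other than the first from an initial segment of a strip leaves a
connected graph. -/
lemma stripGraph_connected_initial {n : ℕ} {c : ℕ → Bool} (hc : c 0 ≠ c 1) {i : Fin n}
    (hi : 1 ≤ (i : ℕ)) {j : ℕ} (hj : 0 < j) :
    ((stripGraph n c).induce {k : Fin n | (k : ℕ) < j ∧ k ≠ i}).Connected := by
  have hn := i.2
  refine connected_induce_of_descent (fun k => (k : ℕ)) (r := ⟨0, by omega⟩) ?_ ?_
  · refine ⟨hj, fun h => ?_⟩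
    rw [← h] at hi
    simp at hi
  · rintro k ⟨hk, hki⟩ hk0
    have hk0 : (k : ℕ) ≠ 0 := fun h => hk0 (Fin.ext h)
    have hkn := k.2
    by_cases h : (k : ℕ) = i + 1
    · obtain ⟨m, hm, hmb, hl⟩ := exists_last_before hc (k := k) (by omega) (!c i)
      have hmi : m ≠ i := by
        rintro rfl
        simp at hmb
      refine ⟨⟨m, by omega⟩, ⟨by simp; omega, fun h => hmi (by rw [← h])⟩, ?_, hm⟩
      refine ((stripGraph_adj_of_lt (by simpa using hm)).2 fun l h1 h2 => ?_).symm
      simpa [hmb] using hl l h1 h2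
    · refine ⟨⟨k - 1, by omega⟩, ⟨by simp; omega, fun h' => h ?_⟩, ?_, by simp; omega⟩
      · rw [← h']
        simp
        omega
      · exact (stripGraph_adj_of_succ (by simp; omega)).symm

lemma stripGraph_connected_final {n : ℕ} {c : ℕ → Bool} {j : ℕ} (hj : j + 1 < n) :
    ((stripGraph n c).induce {k : Fin n | j < (k : ℕ)}).Connected := by
  refine connected_induce_of_descent (fun k => (k : ℕ)) (r := ⟨j + 1, hj⟩) (by simp) ?_
  intro k hk hkj
  have hkj : (k : ℕ) ≠ j + 1 := fun h => hkj (Fin.ext h)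
  have hkn := k.2
  simp only [Set.mem_ofPred_eq] at hk
  exact ⟨⟨k - 1, by omega⟩, by simp; omega, (stripGraph_adj_of_succ (by simp; omega)).symm,
    by simp; omega⟩

/-- If a strip is embedded in a graph without `K₄` minor, then the ends of each diagonal of the
strip separate its two sides in the whole graph. -/
lemma mem_or_mem_of_connected {V : Type*} [Finite V] {G : SimpleGraph V}
    (hG : ¬ HasMinor G (completeGraph (Fin 4))) {n : ℕ} {c : ℕ → Bool} (hc : c 0 ≠ c 1)
    {f : Fin n → V} (finj : Function.Injective f)
    (hf : ∀ ⦃a b⦄, (stripGraph n c).Adj a b → G.Adj (f a) (f b)) {i j p q : Fin n}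
    (hi : 1 ≤ (i : ℕ)) (hij : (i : ℕ) < j) (hj : (j : ℕ) + 1 < n) (hcij : c i ≠ c j)
    (hadj : (stripGraph n c).Adj i j) (hp : (p : ℕ) < j) (hpi : p ≠ i) (hq : (j : ℕ) < q)
    {C : Set V} (hC : (G.induce C).Connected) (hpC : f p ∈ C) (hqC : f q ∈ C) :
    f i ∈ C ∨ f j ∈ C := by
  by_contra! hnot
  obtain ⟨hiC, hjC⟩ := hnot
  set A : Set (Fin n) := {k | (k : ℕ) < j ∧ k ≠ i}
  set B : Set (Fin n) := {k | (j : ℕ) < k}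
  have hA : (G.induce (f '' A)).Connected :=
    connected_induce_image hf (stripGraph_connected_initial hc hi (by omega))
  have hB : (G.induce (f '' B)).Connected :=
    connected_induce_image hf (stripGraph_connected_final hj)
  have hAmem : ∀ k, f k ∈ f '' A ↔ k ∈ A := fun k => finj.mem_set_image
  have hBmem : ∀ k, f k ∈ f '' B ↔ k ∈ B := fun k => finj.mem_set_image
  have hAB : Disjoint (f '' A) (f '' B) := by
    refine Set.disjoint_left.2 ?_
    rintro _ ⟨k, hk, rfl⟩ hk'
    have h1 : (k : ℕ) < j := hk.1
    have h2 : (j : ℕ) < k := (hBmem k).1 hk'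
    omega
  obtain ⟨Y, hBY, hYS, hY, hcl⟩ := exists_connected_closed_superset hB
    (S := (C ∪ f '' B) \ f '' A) fun v hv => ⟨Or.inr hv, Set.disjoint_right.1 hAB hv⟩
  have hnotY : ∀ k, f k ∉ C → k ∉ B → f k ∉ Y := fun k hk1 hk2 hk3 => by
    rcases (hYS hk3).1 with h | h
    exacts [hk1 h, hk2 ((hBmem k).1 h)]
  have hpA : f p ∈ f '' A := ⟨p, ⟨hp, hpi⟩, rfl⟩
  have hij' := stripGraph_adj_of_lt hij |>.1 hadj
  refine hG (hasMinor_completeGraph_four hA hY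
    (Set.disjoint_right.2 fun v hv => (hYS hv).2) ?_ (hnotY i hiC ?_) ?_ (hnotY j hjC ?_)
    (hf hadj) ?_ ?_ ?_ ?_ ?_)
  · exact fun h => ((hAmem i).1 h).2 rfl
  · exact fun h : (j : ℕ) < i => by omega
  · exact fun h => lt_irrefl _ ((hAmem j).1 h).1
  · exact fun h : (j : ℕ) < j => by omega
  · obtain ⟨u, hu, v, hv, huY, hvY, huv⟩ := exists_adj_mem_notMem_of_connected hC Y hqC hpC
      (hBY ⟨q, hq, rfl⟩) fun h => (hYS h).2 hpA
    refine ⟨v, ?_, u, huY, huv.symm⟩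
    by_contra hvA
    exact hvY (hcl u huY v ⟨Or.inl hv, hvA⟩ huv)
  · refine ⟨_, ⟨⟨i - 1, by omega⟩, ⟨by simp; omega, ?_⟩, rfl⟩, hf (stripGraph_adj_of_succ ?_)⟩
    · intro h
      have := congrArg Fin.val h
      simp at this
      omega
    · simp
      omega
  · obtain ⟨m, hm, hmb, hl⟩ := exists_last_before hc (k := j) (by omega) (c j)
    refine ⟨_, ⟨⟨m, by omega⟩, ⟨hm, ?_⟩, rfl⟩, hf ((stripGraph_adj_of_lt hm).2 ?_)⟩
    · intro h
      rw [← h] at hcij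
      exact hcij hmb
    · simpa [hmb] using hl
  · refine ⟨_, hBY ⟨⟨j + 1, hj⟩, Nat.lt_succ_self (j : ℕ), rfl⟩, hf ((stripGraph_adj_of_lt ?_).2 ?_).symm⟩
    · simp
      omega
    · intro k h1 h2
      rcases Nat.lt_succ_iff_lt_or_eq.1 h2 with h2 | rfl
      exacts [hij' k h1 h2, hcij.symm]
  · exact ⟨_, hBY ⟨⟨j + 1, hj⟩, Nat.lt_succ_self (j : ℕ), rfl⟩, hf (stripGraph_adj_of_succ rfl).symm⟩

/-- A strip embedded in a graph without `K₄` minor is an induced subgraph. -/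
lemma stripGraph_adj_of_adj {V : Type*} [Finite V] {G : SimpleGraph V}
    (hG : ¬ HasMinor G (completeGraph (Fin 4))) {n : ℕ} {c : ℕ → Bool} (hc : c 0 ≠ c 1)
    {f : Fin n → V} (finj : Function.Injective f)
    (hf : ∀ ⦃a b⦄, (stripGraph n c).Adj a b → G.Adj (f a) (f b)) (hc2 : c 2 = c 0) {p q : Fin n}
    (h : G.Adj (f p) (f q)) : (stripGraph n c).Adj p q := by
  wlog hpq : (p : ℕ) < q generalizing p q
  · refine (this h.symm ?_).symm
    have : p ≠ q := fun e => h.ne (congrArg f e)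
    have : (p : ℕ) ≠ q := fun e => this (Fin.ext e)
    omega
  refine (stripGraph_adj_of_lt hpq).2 fun k h1 h2 hk => ?_
  have hk2 : 2 ≤ k := by
    by_contra hk2
    obtain rfl : k = 1 := by omega
    have hp0 : (p : ℕ) = 0 := by omega
    rw [hp0] at hk
    exact hc hk.symm
  obtain ⟨m, hm, hm1, hmk, hl⟩ := exists_diagonal_before hc hc2 hk2
  have hqn := q.2
  have hmp : m ≠ p := fun e => hmk (by rw [e, hk])
  have := mem_or_mem_of_connected hG hc finj hf (i := ⟨m, by omega⟩) (j := ⟨k, by omega⟩)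
    (p := p) (q := q) hm1 hm (by simp; omega) hmk ((stripGraph_adj_of_lt hm).2 hl)
    h1 (fun e => hmp (by rw [e])) h2 (induce_pair_connected_of_adj h) (by simp) (by simp)
  simp only [Set.mem_insert_iff, Set.mem_singleton_iff, finj.eq_iff, Fin.ext_iff] at this
  omega

/-- Two strips embedded in a graph without `K₄` minor that have the same first and the same last
vertex have the same vertices. -/
lemma mem_range_of_stripGraph {V : Type*} [Finite V] {G : SimpleGraph V}
    (hG : ¬ HasMinor G (completeGraph (Fin 4))) {n : ℕ} (hn : 4 ≤ n) {c d : ℕ → Bool}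
    (hc : c 0 ≠ c 1) (hc2 : c 2 = c 0) (hd : d 0 ≠ d 1) {f g : Fin n → V}
    (finj : Function.Injective f) (ginj : Function.Injective g)
    (hf : ∀ ⦃a b⦄, (stripGraph n c).Adj a b → G.Adj (f a) (f b))
    (hg : ∀ ⦃a b⦄, (stripGraph n d).Adj a b → G.Adj (g a) (g b))
    (h0 : f ⟨0, by omega⟩ = g ⟨0, by omega⟩)
    (h1 : f ⟨n - 1, by omega⟩ = g ⟨n - 1, by omega⟩) (j : Fin n) : f j ∈ Set.range g := by
  by_contra hj
  have hjn := j.2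
  have hj0 : (j : ℕ) ≠ 0 := fun h => hj ⟨⟨0, by omega⟩, by rw [← h0]; exact congrArg f (Fin.ext h.symm)⟩
  have hj1 : (j : ℕ) ≠ n - 1 := fun h =>
    hj ⟨⟨n - 1, by omega⟩, by rw [← h1]; exact congrArg f (Fin.ext h.symm)⟩
  have hsep : ∀ x : Fin n, (x : ℕ) ≠ 0 → (x : ℕ) ≠ n - 1 →
      ∃ C ⊆ Set.range g, (G.induce C).Connected ∧ f x ∉ C ∧ f ⟨0, by omega⟩ ∈ C ∧
        f ⟨n - 1, by omega⟩ ∈ C := by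
    intro x hx0 hx1
    obtain ⟨v, hv0, hv1, hv⟩ : ∃ v : Fin n, (v : ℕ) ≠ 0 ∧ (v : ℕ) ≠ n - 1 ∧
        ∀ k, g k = f x → k = v := by
      by_cases hx : f x ∈ Set.range g
      · obtain ⟨v, hv⟩ := hx
        refine ⟨v, fun h => hx0 ?_, fun h => hx1 ?_, fun k hk => ginj (hk.trans hv.symm)⟩
        · rw [show v = ⟨0, by omega⟩ from Fin.ext h, ← h0] at hv
          rw [← finj hv]
        · rw [show v = ⟨n - 1, by omega⟩ from Fin.ext h, ← h1] at hv
          rw [← finj hv]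
      · exact ⟨⟨1, by omega⟩, by simp, by simp; omega, fun k hk => (hx ⟨k, hk⟩).elim⟩
    refine ⟨_, Set.image_subset_range g _, connected_induce_image hg
      (stripGraph_connected_initial hd (i := v) (by omega) (j := n) (by omega)), ?_, ?_, ?_⟩
    · rintro ⟨k, hk, hkx⟩
      exact hk.2 (hv k hkx)
    · exact h0 ▸ ⟨_, ⟨by simp; omega, fun h => hv0 (by rw [← h])⟩, rfl⟩
    · exact h1 ▸ ⟨_, ⟨by simp; omega, fun h => hv1 (by rw [← h])⟩, rfl⟩
  obtain ⟨m, hm, hm1, hmk, hl⟩ := exists_diagonal_before hc hc2 (k := max j 2) (by omega)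
  have hdiag := fun (C : Set V) => mem_or_mem_of_connected hG hc finj hf
    (i := ⟨m, by omega⟩) (j := ⟨max j 2, by omega⟩) (p := ⟨0, by omega⟩)
    (q := ⟨n - 1, by omega⟩) hm1 hm (by simp; omega) hmk ((stripGraph_adj_of_lt hm).2 hl)
    (by simp) (by simp; omega) (by simp; omega) (C := C)
  by_cases hj2 : 2 ≤ (j : ℕ)
  · obtain ⟨C, hCg, hC, hmC, h0C, h1C⟩ := hsep ⟨m, by omega⟩ (by simp; omega) (by simp; omega)
    have hjC := (hdiag C hC h0C h1C).resolve_left hmC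
    simp only [max_eq_left hj2] at hjC
    exact hj (hCg hjC)
  · obtain ⟨C, hCg, hC, hmC, h0C, h1C⟩ := hsep ⟨max j 2, by omega⟩ (by simp) (by simp; omega)
    have hjC := (hdiag C hC h0C h1C).resolve_right hmC
    have hmj : (⟨m, by omega⟩ : Fin n) = j := Fin.ext (by simp; omega)
    rw [hmj] at hjC
    exact hj (hCg hjC)

/-- An embedding of one strip in another one that fixes the first vertex is the identity, if both
strips start with the sides `false, true, false, true`. -/
lemma stripGraph_hom_eq {n : ℕ} (hn : 5 ≤ n) {c d : ℕ → Bool}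
    (hc : c 0 = false ∧ c 1 = true ∧ c 2 = false ∧ c 3 = true)
    (hd : d 0 = false ∧ d 1 = true ∧ d 2 = false ∧ d 3 = true) {φ : Fin n → Fin n}
    (φinj : Function.Injective φ)
    (hφ : ∀ ⦃a b⦄, (stripGraph n c).Adj a b → (stripGraph n d).Adj (φ a) (φ b))
    (h0 : (φ ⟨0, by omega⟩ : ℕ) = 0) (k : ℕ) (hk : k < n) : (φ ⟨k, hk⟩ : ℕ) = k := by
  have hne : ∀ i j (hi : i < n) (hj : j < n), i ≠ j → (φ ⟨i, hi⟩ : ℕ) ≠ φ ⟨j, hj⟩ :=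
    fun i j hi hj hij h => hij (congrArg Fin.val (φinj (Fin.ext h)))
  have hadj : ∀ i j (hi : i < n) (hj : j < n), i < j → (∀ l, i < l → l < j → c l ≠ c i) →
      (∀ l, (φ ⟨i, hi⟩ : ℕ) < l → l < φ ⟨j, hj⟩ → d l ≠ d (φ ⟨i, hi⟩)) := by
    intro i j hi hj hij h l h1 h2
    have := hφ ((stripGraph_adj_of_lt (i := ⟨i, hi⟩) (j := ⟨j, hj⟩) hij).2 h)
    exact (stripGraph_adj_of_lt (by omega)).1 this l h1 h2
  induction k using Nat.strong_induction_on with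
  | _ k ih =>
    rcases Nat.lt_or_ge k 3 with h3 | h3
    · have a1 := hadj 0 1 (by omega) (by omega) (by omega) (fun l _ _ => by omega)
      have a2 := hadj 0 2 (by omega) (by omega) (by omega) (fun l _ _ => by
        obtain rfl : l = 1 := by omega
        simp [hc])
      have a3 := hadj 1 3 (by omega) (by omega) (by omega) (fun l _ _ => by
        obtain rfl : l = 2 := by omega
        simp [hc])
      have a4 := hadj 2 3 (by omega) (by omega) (by omega) (fun l _ _ => by omega)
      have a5 := hadj 2 4 (by omega) (by omega) (by omega) (fun l _ _ => by
        obtain rfl : l = 3 := by omega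
        simp [hc])
      have n1 := hne 0 1 (by omega) (by omega) (by omega)
      have n2 := hne 0 2 (by omega) (by omega) (by omega)
      have n3 := hne 0 3 (by omega) (by omega) (by omega)
      have n4 := hne 0 4 (by omega) (by omega) (by omega)
      have n5 := hne 1 2 (by omega) (by omega) (by omega)
      have n6 := hne 1 3 (by omega) (by omega) (by omega)
      have n7 := hne 1 4 (by omega) (by omega) (by omega)
      have n8 := hne 2 3 (by omega) (by omega) (by omega)
      have n9 := hne 2 4 (by omega) (by omega) (by omega)
      have n10 := hne 3 4 (by omega) (by omega) (by omega)
      have e1 : (φ ⟨1, by omega⟩ : ℕ) ≤ 2 := by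
        by_contra h
        exact a1 2 (by omega) (by omega) (by simp [h0, hd])
      have e2 : (φ ⟨2, by omega⟩ : ℕ) ≤ 2 := by
        by_contra h
        exact a2 2 (by omega) (by omega) (by simp [h0, hd])
      have e3 : (φ ⟨2, by omega⟩ : ℕ) ≠ 1 := by
        intro h
        have e4 : (φ ⟨3, by omega⟩ : ℕ) ≤ 3 := by
          by_contra h'
          exact a4 3 (by omega) (by omega) (by simp [h, hd])
        have e5 : (φ ⟨4, by omega⟩ : ℕ) ≤ 3 := by
          by_contra h'
          exact a5 3 (by omega) (by omega) (by simp [h, hd])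
        omega
      interval_cases k <;> omega
    · obtain ⟨k, rfl⟩ : ∃ l, k = l + 1 := ⟨k - 1, by omega⟩
      obtain ⟨m, hm, hmb, hl⟩ := exists_last_before (c := c) (by simp [hc]) (k := k + 1)
        (by omega) (!c k)
      have hmk : m ≠ k := by
        rintro rfl
        simp at hmb
      have a1 := hadj m (k + 1) (by omega) hk hm (by simpa only [hmb] using hl)
      have a2 := hadj k (k + 1) (by omega) hk (by omega) (fun l _ _ => by omega)
      rw [ih m hm] at a1
      rw [ih k (by omega)] at a2
      have hge : ¬ (φ ⟨k + 1, hk⟩ : ℕ) < k + 1 := fun h =>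
        hne (φ ⟨k + 1, hk⟩) (k + 1) (by omega) hk (by omega) (ih _ h (by omega))
      by_contra hgt
      have b1 := a1 k (by omega) (by omega)
      have b2 := a1 (k + 1) (by omega) (by omega)
      have b3 := a2 (k + 1) (by omega) (by omega)
      revert b1 b2 b3
      generalize d k = x
      generalize d (k + 1) = y
      generalize d m = z
      revert x y z
      decide

/-- A strip embedded in a graph without `K₄` minor is determined by its first and last vertex. -/
lemma stripGraph_sides_eq {V : Type*} [Finite V] {G : SimpleGraph V}
    (hG : ¬ HasMinor G (completeGraph (Fin 4))) {n : ℕ} (hn : 5 ≤ n) {c d : ℕ → Bool}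
    (hc : c 0 = false ∧ c 1 = true ∧ c 2 = false ∧ c 3 = true)
    (hd : d 0 = false ∧ d 1 = true ∧ d 2 = false ∧ d 3 = true) {f g : Fin n → V}
    (finj : Function.Injective f) (ginj : Function.Injective g)
    (hf : ∀ ⦃a b⦄, (stripGraph n c).Adj a b → G.Adj (f a) (f b))
    (hg : ∀ ⦃a b⦄, (stripGraph n d).Adj a b → G.Adj (g a) (g b))
    (h0 : f ⟨0, by omega⟩ = g ⟨0, by omega⟩)
    (h1 : f ⟨n - 1, by omega⟩ = g ⟨n - 1, by omega⟩) {k : ℕ} (hk : k + 1 < n) : c k = d k := by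
  have hc01 : c 0 ≠ c 1 := by simp [hc]
  have hd01 : d 0 ≠ d 1 := by simp [hd]
  have hc02 : c 2 = c 0 := by simp [hc]
  have hd02 : d 2 = d 0 := by simp [hd]
  choose φ hφ using mem_range_of_stripGraph hG (by omega) hc01 hc02 hd01 finj ginj hf hg h0 h1
  have φinj : Function.Injective φ := fun a b h => finj (by rw [← hφ a, ← hφ b, h])
  have hφid := stripGraph_hom_eq hn hc hd φinj (fun a b h =>
    stripGraph_adj_of_adj hG hd01 ginj hg hd02 (by rw [hφ, hφ]; exact hf h))
    (congrArg Fin.val (ginj ((hφ _).trans h0)))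
  have hfg : f = g := by
    funext a
    have : φ a = a := Fin.ext (hφid a a.2)
    rw [← hφ a, this]
  subst hfg
  have hiff : ∀ a b, (stripGraph n c).Adj a b ↔ (stripGraph n d).Adj a b := fun a b =>
    ⟨fun h => stripGraph_adj_of_adj hG hd01 ginj hg hd02 (hf h),
      fun h => stripGraph_adj_of_adj hG hc01 finj hf hc02 (hg h)⟩
  induction k with
  | zero => rw [hc.1, hd.1]
  | succ k ih =>
    have hiff := hiff ⟨k, by omega⟩ ⟨k + 2, by omega⟩
    rw [stripGraph_adj_of_lt (by simp), stripGraph_adj_of_lt (by simp)] at hiff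
    have hone : ∀ e : ℕ → Bool, (∀ l, k < l → l < k + 2 → e l ≠ e k) ↔ e (k + 1) ≠ e k := by
      refine fun e => ⟨fun h => h _ (by omega) (by omega), fun h l h1 h2 => ?_⟩
      obtain rfl : l = k + 1 := by omega
      exact h
    have hk' := ih (by omega)
    simp only at hiff
    rw [hone, hone, hk'] at hiff
    revert hiff
    generalize c (k + 1) = x
    generalize d (k + 1) = y
    generalize d k = z
    revert x y z
    decide

/-- For `n ≥ 6`, any outerplanar graph containing every `n`-vertex outerplanar graph as a
subgraph has at least `√2^(n−5)` vertices. -/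
theorem outerplanar_universal_lower_bound (n : ℕ) (hn : 6 ≤ n) {V : Type*} [Fintype V]
    (G : SimpleGraph V) (hG : IsOuterplanar G)
    (huniv : ∀ H : SimpleGraph (Fin n), IsOuterplanar H → Contains G H) :
    Real.sqrt 2 ^ (n - 5) ≤ (Fintype.card V : ℝ) := by
  let side : (Fin (n - 5) → Bool) → ℕ → Bool := fun w k =>
    if k < 4 then k.bodd else if h : k - 4 < n - 5 then w ⟨k - 4, h⟩ else false
  have hside : ∀ w, side w 0 = false ∧ side w 1 = true ∧ side w 2 = false ∧ side w 3 = true :=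
    fun w => ⟨rfl, rfl, rfl, rfl⟩
  choose f hf using fun w => huniv (stripGraph n (side w)) (isOuterplanar_stripGraph n _)
  have hinj : Function.Injective
      fun w => (f w ⟨0, by omega⟩, f w ⟨n - 1, by omega⟩) := by
    intro w w' h
    obtain ⟨h0, h1⟩ := Prod.ext_iff.1 h
    funext i
    have hi := i.2
    have := stripGraph_sides_eq hG.1 (by omega) (hside w) (hside w') (f w).injective
      (f w').injective (hf w) (hf w') h0 h1 (k := i + 4) (by omega)
    simpa [side, hi] using this
  have hcard := Fintype.card_le_of_injective _ hinj
  simp only [Fintype.card_fun, Fintype.card_bool, Fintype.card_fin, Fintype.card_prod] at hcard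
  refine (sq_le_sq₀ (by positivity) (Nat.cast_nonneg _)).1 ?_
  rw [← pow_mul, mul_comm, pow_mul, Real.sq_sqrt (by norm_num), sq]
  exact_mod_cast hcard
end

section
/- For each n ≥ 6, the number of pairs (H, Δ), where H is an n-vertex path-like maximal outerplanar graph and Δ is an ear of H, is at least 2^{n−5}. -/
open SimpleGraph

/-- A maximal outerplanar graph: adding any missing edge destroys outerplanarity. -/
def IsMaxOuterplanar {V : Type*} (G : SimpleGraph V) : Prop :=
  IsOuterplanar G ∧ ∀ a b : V, a ≠ b → ¬ G.Adj a b →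
    ¬ IsOuterplanar (G ⊔ SimpleGraph.fromEdgeSet {s(a, b)})

/-- A path-like outerplanar graph: a maximal outerplanar graph whose weak dual is a path.
For a maximal outerplanar graph on at least 4 vertices, the leaves of the (tree) weak dual
are exactly the ears, which correspond to vertices of degree 2; so the weak dual is a path
iff there are exactly two vertices of degree 2. -/
def IsPathLike {V : Type*} [Fintype V] (G : SimpleGraph V) : Prop :=
  IsMaxOuterplanar G ∧ {v : V | (G.neighborSet v).ncard = 2}.ncard = 2

/-- Pairs `(H, Δ)` of an `n`-vertex path-like maximal outerplanar graph together with an ear,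
encoded by the degree-2 vertex of the ear triangle, up to isomorphism of pairs. -/
def earSetoid (n : ℕ) :
    Setoid {p : SimpleGraph (Fin n) × Fin n //
      IsPathLike p.1 ∧ (p.1.neighborSet p.2).ncard = 2} where
  r P Q := ∃ e : P.1.1 ≃g Q.1.1, e P.1.2 = Q.1.2
  iseqv := by
    refine ⟨fun P => ⟨RelIso.refl _, rfl⟩, ?_, ?_⟩
    · rintro P Q ⟨e, he⟩
      exact ⟨e.symm, by simp [← he]⟩
    · rintro P Q R ⟨e, he⟩ ⟨f, hf⟩
      exact ⟨e.trans f, by simp [RelIso.trans_apply, he, hf]⟩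

namespace SimpleGraph

section Crossing

variable {V : Type*} {G : SimpleGraph V}

theorem exists_adj_of_connected_induce {A : Set V} (hA : (G.induce A).Connected) (P : V → Prop)
    {a c : V} (ha : a ∈ A) (hc : c ∈ A) (hPa : P a) (hPc : ¬ P c) :
    ∃ x ∈ A, ∃ y ∈ A, G.Adj x y ∧ P x ∧ ¬ P y := by
  obtain ⟨w⟩ := hA.preconnected ⟨a, ha⟩ ⟨c, hc⟩
  obtain ⟨d, -, h₁, h₂⟩ := w.exists_boundary_dart {x | P x.1} hPa hPc
  exact ⟨d.fst, d.fst.2, d.snd, d.snd.2, d.adj, h₁, h₂⟩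

/-- Placing the vertices on a line by `pos`, no two edges cross when drawn on one side of it. -/
def Noncrossing (G : SimpleGraph V) (pos : V → ℤ) : Prop :=
  ∀ ⦃a b c d⦄, G.Adj a c → G.Adj b d → pos a < pos b → pos b < pos c → pos c < pos d → False

variable {pos : V → ℤ}

theorem Noncrossing.connected (h : G.Noncrossing pos) (hpos : pos.Injective) {A B : Set V}
    (hA : (G.induce A).Connected) (hB : (G.induce B).Connected) (hAB : Disjoint A B) {a b c d : V}
    (ha : a ∈ A) (hb : b ∈ B) (hc : c ∈ A) (hd : d ∈ B)
    (hab : pos a < pos b) (hbc : pos b < pos c) (hcd : pos c < pos d) : False := by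
  have hne : ∀ x ∈ A, ∀ y ∈ B, pos x ≠ pos y := fun x hx y hy e =>
    Set.disjoint_left.1 hAB hx (hpos e ▸ hy)
  obtain ⟨x, hx, y, hy, hxy, hx', hy'⟩ := exists_adj_of_connected_induce hA
    (fun v => pos b < pos v ∧ pos v < pos d) hc ha ⟨hbc, hcd⟩ (by omega)
  have h₁ := hne x hx
  have h₂ := hne y hy
  have h₃ := h₁ b hb
  have h₄ := h₁ d hd
  have h₅ := h₂ b hb
  have h₆ := h₂ d hd
  have key : ∀ u ∈ B, ∀ v ∈ B, G.Adj u v →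
      ((pos x < pos u ∧ pos u < pos y) ∨ (pos y < pos u ∧ pos u < pos x)) →
      ¬ ((pos x < pos v ∧ pos v < pos y) ∨ (pos y < pos v ∧ pos v < pos x)) → False := by
    intro u hu v hv huv h₇ h₈
    have h₉ := h₁ v hv
    have h₁₀ := h₂ v hv
    rcases h₇ with h₇ | h₇
    · rcases lt_or_gt_of_ne h₉ with h' | h'
      · exact h hxy huv h₇.1 h₇.2 (by omega)
      · exact h huv.symm hxy (by omega) h₇.1 h₇.2
    · rcases lt_or_gt_of_ne h₁₀ with h' | h'
      · exact h hxy.symm huv h₇.1 h₇.2 (by omega)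
      · exact h huv.symm hxy.symm (by omega) h₇.1 h₇.2
  by_cases hbP : (pos x < pos b ∧ pos b < pos y) ∨ (pos y < pos b ∧ pos b < pos x)
  · obtain ⟨u, hu, v, hv, huv, hu', hv'⟩ := exists_adj_of_connected_induce hB
      (fun v => (pos x < pos v ∧ pos v < pos y) ∨ (pos y < pos v ∧ pos v < pos x)) hb hd hbP
      (by omega)
    exact key u hu v hv huv hu' hv'
  · obtain ⟨u, hu, v, hv, huv, hu', hv'⟩ := exists_adj_of_connected_induce hB
      (fun v => (pos x < pos v ∧ pos v < pos y) ∨ (pos y < pos v ∧ pos v < pos x)) hd hb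
      (by omega) hbP
    exact key u hu v hv huv hu' hv'

/-- Two disjoint pairs of adjacent branch sets of a minor do not cross. -/
theorem Noncrossing.branchSets (h : G.Noncrossing pos) (hpos : pos.Injective) {W : Type*}
    {H : SimpleGraph W} {f : W → Set V} (hconn : ∀ w, (G.induce (f w)).Connected)
    (hdisj : Pairwise fun w₁ w₂ => Disjoint (f w₁) (f w₂))
    (hadj : ∀ ⦃w₁ w₂⦄, H.Adj w₁ w₂ → ∃ a ∈ f w₁, ∃ b ∈ f w₂, G.Adj a b)
    {r : W → V} (hr : ∀ w, r w ∈ f w) {a b c d : W} (hac : H.Adj a c) (hbd : H.Adj b d)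
    (hab : pos (r a) < pos (r b)) (hbc : pos (r b) < pos (r c)) (hcd : pos (r c) < pos (r d)) :
    False := by
  have conn : ∀ {u v}, H.Adj u v → (G.induce (f u ∪ f v)).Connected := by
    intro u v huv
    obtain ⟨x, hx, y, hy, hxy⟩ := hadj huv
    exact connected_induce_union (hconn u).preconnected (hconn v).preconnected hx hy hxy
  have ne : ∀ {u v}, pos (r u) < pos (r v) → u ≠ v := by
    rintro u v huv rfl
    exact lt_irrefl _ huv
  refine h.connected hpos (conn hac) (conn hbd) ?_ (.inl (hr a)) (.inl (hr b)) (.inr (hr c))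
    (.inr (hr d)) hab hbc hcd
  simp only [Set.disjoint_union_left, Set.disjoint_union_right]
  exact ⟨⟨hdisj (ne hab), hdisj (ne hbc).symm⟩, hdisj (ne (by omega)), hdisj (ne hcd)⟩

theorem Noncrossing.isOuterplanar (h : G.Noncrossing pos) (hpos : pos.Injective) :
    IsOuterplanar G := by
  constructor
  · rintro ⟨f, hne, hconn, hdisj, hadj⟩
    choose r hr using hne
    have hinj : (pos ∘ r).Injective := by
      refine hpos.comp fun u v huv => by_contra fun hne => ?_
      exact Set.disjoint_left.1 (hdisj hne) (hr u) (huv ▸ hr v)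
    have hσ := (Tuple.monotone_sort (pos ∘ r)).strictMono_of_injective
      (hinj.comp (Tuple.sort (pos ∘ r)).injective)
    have ne : ∀ {i j : Fin 4}, i ≠ j →
        (completeGraph (Fin 4)).Adj (Tuple.sort (pos ∘ r) i) (Tuple.sort (pos ∘ r) j) :=
      fun hij e => hij ((Tuple.sort (pos ∘ r)).injective e)
    exact h.branchSets hpos hconn hdisj hadj hr (ne (i := 0) (j := 2) (by decide))
      (ne (i := 1) (j := 3) (by decide)) (hσ (by decide : (0 : Fin 4) < 1))
      (hσ (by decide : (1 : Fin 4) < 2)) (hσ (by decide : (2 : Fin 4) < 3))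
  · rintro ⟨f, hne, hconn, hdisj, hadj⟩
    choose r hr using hne
    have hinj : (pos ∘ r).Injective := by
      refine hpos.comp fun u v huv => by_contra fun hne => ?_
      exact Set.disjoint_left.1 (hdisj hne) (hr u) (huv ▸ hr v)
    have cross : ∀ (i j : Fin 2) (k l : Fin 3) (a b c d : ℤ),
        (a = pos (r (.inl i)) ∧ c = pos (r (.inr k)) ∨ c = pos (r (.inl i)) ∧ a = pos (r (.inr k))) →
        (b = pos (r (.inl j)) ∧ d = pos (r (.inr l)) ∨ d = pos (r (.inl j)) ∧ b = pos (r (.inr l))) →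
        ¬ (a < b ∧ b < c ∧ c < d) := by
      rintro i j k l a b c d (⟨rfl, rfl⟩ | ⟨rfl, rfl⟩) (⟨rfl, rfl⟩ | ⟨rfl, rfl⟩) ⟨h₁, h₂, h₃⟩ <;>
      exact h.branchSets hpos hconn hdisj hadj hr (by simp) (by simp) h₁ h₂ h₃
    have n₁ : ∀ i m, pos (r (.inl i)) ≠ pos (r (.inr m)) := fun i m e => by simpa using hinj e
    have ordered : ∀ (i j : Fin 2) (k l : Fin 3), pos (r (.inl i)) < pos (r (.inl j)) →
        pos (r (.inr k)) < pos (r (.inr l)) →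
        ((pos (r (.inl i)) < pos (r (.inr k)) ↔ pos (r (.inr k)) < pos (r (.inl j))) ↔
          (pos (r (.inl i)) < pos (r (.inr l)) ↔ pos (r (.inr l)) < pos (r (.inl j)))) →
        False := by
      intro i j k l hij hkl h'
      have := n₁ i k
      have := n₁ i l
      have := n₁ j k
      have := n₁ j l
      have c₁ := cross i j l k _ _ _ _ (.inl ⟨rfl, rfl⟩) (.inr ⟨rfl, rfl⟩)
      have c₂ := cross i j k l _ _ _ _ (.inr ⟨rfl, rfl⟩) (.inr ⟨rfl, rfl⟩)
      have c₃ := cross j i k l _ _ _ _ (.inr ⟨rfl, rfl⟩) (.inl ⟨rfl, rfl⟩)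
      have c₄ := cross i j k l _ _ _ _ (.inl ⟨rfl, rfl⟩) (.inl ⟨rfl, rfl⟩)
      clear cross n₁
      omega
    have leaves : ∀ k l : Fin 3, k ≠ l →
        ((pos (r (.inl 0)) < pos (r (.inr k)) ↔ pos (r (.inr k)) < pos (r (.inl 1))) ↔
          (pos (r (.inl 0)) < pos (r (.inr l)) ↔ pos (r (.inr l)) < pos (r (.inl 1)))) →
        False := by
      intro k l hkl h'
      have n₂ : pos (r (.inr k)) ≠ pos (r (.inr l)) := fun e => hkl (by simpa using hinj e)
      have n₃ : pos (r (.inl 0)) ≠ pos (r (.inl 1)) := fun e => by simpa using hinj e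
      have := n₁ 0 k
      have := n₁ 0 l
      have := n₁ 1 k
      have := n₁ 1 l
      rcases lt_or_gt_of_ne n₂ with hkl | hkl <;> rcases lt_or_gt_of_ne n₃ with h₀ | h₀
      · exact ordered 0 1 k l h₀ hkl h'
      · exact ordered 1 0 k l h₀ hkl (by clear cross ordered n₁; omega)
      · exact ordered 0 1 l k h₀ hkl h'.symm
      · exact ordered 1 0 l k h₀ hkl (by clear cross ordered n₁; omega)
    have := leaves 0 1 (by decide)
    have := leaves 0 2 (by decide)
    have := leaves 1 2 (by decide)
    tauto

theorem connected_induce_of_descending {n : ℕ} {G : SimpleGraph (Fin n)} {S : Set (Fin n)}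
    {r : Fin n} (hr : r ∈ S) (h : ∀ v ∈ S, v ≠ r → ∃ w ∈ S, w < v ∧ G.Adj w v) :
    (G.induce S).Connected := by
  rw [connected_iff_exists_forall_reachable]
  refine ⟨⟨r, hr⟩, ?_⟩
  rintro ⟨v, hv⟩
  induction v using WellFoundedLT.induction with
  | ind v ih =>
    by_cases hvr : v = r
    · subst hvr
      rfl
    · obtain ⟨w, hw, hwv, hadj⟩ := h v hv hvr
      exact (ih w hwv hw).trans (Adj.reachable (G := G.induce S) (u := ⟨w, hw⟩) (v := ⟨v, hv⟩) hadj)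

theorem hasMinor_completeGraph_four {A B C D : Set V}
    (hA : (G.induce A).Connected) (hB : (G.induce B).Connected)
    (hC : (G.induce C).Connected) (hD : (G.induce D).Connected)
    (hAB : Disjoint A B) (hAC : Disjoint A C) (hAD : Disjoint A D)
    (hBC : Disjoint B C) (hBD : Disjoint B D) (hCD : Disjoint C D)
    (eAB : ∃ a ∈ A, ∃ b ∈ B, G.Adj a b) (eAC : ∃ a ∈ A, ∃ b ∈ C, G.Adj a b)
    (eAD : ∃ a ∈ A, ∃ b ∈ D, G.Adj a b) (eBC : ∃ a ∈ B, ∃ b ∈ C, G.Adj a b)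
    (eBD : ∃ a ∈ B, ∃ b ∈ D, G.Adj a b) (eCD : ∃ a ∈ C, ∃ b ∈ D, G.Adj a b) :
    HasMinor G (completeGraph (Fin 4)) := by
  have swap : ∀ {S T : Set V}, (∃ a ∈ S, ∃ b ∈ T, G.Adj a b) → ∃ a ∈ T, ∃ b ∈ S, G.Adj a b :=
    fun ⟨a, ha, b, hb, hab⟩ => ⟨b, hb, a, ha, hab.symm⟩
  have conn : ∀ i : Fin 4, (G.induce (![A, B, C, D] i)).Connected := by
    intro i
    fin_cases i <;> assumption
  refine ⟨![A, B, C, D], fun i => Set.nonempty_coe_sort.1 (conn i).nonempty, conn, ?_, ?_⟩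
  · intro i j hij
    fin_cases i <;> fin_cases j <;>
      first | exact absurd rfl hij | assumption | (apply Disjoint.symm; assumption)
  · intro i j hij
    fin_cases i <;> fin_cases j <;>
      first | exact absurd rfl hij | assumption | (apply swap; assumption)

end Crossing

/-- The triangulated strip whose vertices, taken in order, lie on the side given by `s`. -/
def strip (s : ℕ → Bool) (n : ℕ) : SimpleGraph (Fin n) where
  Adj i j := (i < j ∧ ∀ m : ℕ, i.1 < m → m < j.1 → s m ≠ s i) ∨
    (j < i ∧ ∀ m : ℕ, j.1 < m → m < i.1 → s m ≠ s j)
  symm := ⟨fun _ _ h => h.symm⟩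
  loopless := ⟨fun _ h => by simp at h⟩

section Strip

variable {s : ℕ → Bool} {n : ℕ}

theorem strip_adj_of_lt {i j : Fin n} (hij : i < j) :
    (strip s n).Adj i j ↔ ∀ m : ℕ, i.1 < m → m < j.1 → s m ≠ s i := by
  simp [strip, hij, hij.not_gt]

theorem strip_adj_succ {i j : Fin n} (hij : i.1 + 1 = j.1) : (strip s n).Adj i j :=
  (strip_adj_of_lt (Fin.lt_def.2 (by omega))).2 fun m _ _ => by omega

/-- The position of a vertex of the strip on the boundary cycle. -/
def stripPos (s : ℕ → Bool) (n : ℕ) (i : Fin n) : ℤ := if s i then i else -i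

theorem stripPos_injective : (stripPos s n).Injective := by
  intro i j h
  unfold stripPos at h
  ext
  split_ifs at h <;> omega

theorem strip_noncrossing : (strip s n).Noncrossing (stripPos s n) := by
  rintro ⟨a, ha⟩ ⟨b, hb⟩ ⟨c, hc⟩ ⟨d, hd⟩ hac hbd hab hbc hcd
  simp only [strip, Fin.mk_lt_mk, stripPos] at *
  cases ea : s a <;> cases eb : s b <;> cases ec : s c <;> cases ed : s d <;>
    simp only [ea, eb, ec, ed, if_true, if_false, Bool.false_eq_true] at hab hbc hcd <;>
    grind

theorem strip_isOuterplanar : IsOuterplanar (strip s n) :=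
  strip_noncrossing.isOuterplanar stripPos_injective

/-- Before any vertex from the third on, there is a last vertex on either side; the two vertices
are adjacent. -/
theorem exists_last_on_side (h₀₁ : s 0 ≠ s 1) {k : Fin n} (hk : 2 ≤ k.1) (τ : Bool) :
    ∃ i < k, s i = τ ∧ (∀ m : ℕ, i.1 < m → m < k.1 → s m ≠ τ) ∧ (strip s n).Adj i k := by
  have hspec : s (Nat.findGreatest (fun m => s m = τ) (k - 1)) = τ := by
    by_cases h : s 0 = τ
    · exact Nat.findGreatest_spec (P := fun m => s m = τ) (Nat.zero_le _) h
    · refine Nat.findGreatest_spec (P := fun m => s m = τ) (m := 1) (by omega) ?_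
      cases h₀ : s 0 <;> cases h₁ : s 1 <;> cases τ <;> simp_all
  have hle := Nat.findGreatest_le (P := fun m => s m = τ) (k.1 - 1)
  have hlast : ∀ m : ℕ, Nat.findGreatest (fun m => s m = τ) (k.1 - 1) < m → m < k.1 → s m ≠ τ :=
    fun m h₁ h₂ => Nat.findGreatest_is_greatest h₁ (by omega)
  generalize Nat.findGreatest (fun m => s m = τ) (k.1 - 1) = i at *
  have hik : (⟨i, by omega⟩ : Fin n) < k := Fin.lt_def.2 (by simp only; omega)
  refine ⟨⟨i, by omega⟩, hik, hspec, hlast, (strip_adj_of_lt hik).2 ?_⟩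
  simpa only [hspec] using hlast

theorem hasMinor_of_strip_le (h₀₁ : s 0 ≠ s 1) {G : SimpleGraph (Fin n)} (hG : strip s n ≤ G)
    {i j : Fin n} (hij : i < j) (hadj : ¬ (strip s n).Adj i j) (hGij : G.Adj i j) :
    HasMinor G (completeGraph (Fin 4)) := by
  have single : ∀ v : Fin n, (G.induce {v}).Connected := fun v =>
    connected_induce_of_descending rfl fun w hw hne => absurd hw hne
  rw [strip_adj_of_lt hij] at hadj
  push Not at hadj
  obtain ⟨m, him, hmj, hm⟩ := hadj
  have hi' : i.1 + 1 < n := by omega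
  by_cases hopp : ∃ m : ℕ, i.1 < m ∧ m < j.1 ∧ s m ≠ s i
  · have hex : ∃ x : ℕ, i.1 < x ∧ x < j.1 ∧ s x ≠ s (i + 1) := by
      obtain ⟨m', h₁, h₂, h₃⟩ := hopp
      by_cases h : s (i + 1) = s i
      · exact ⟨m', h₁, h₂, h ▸ h₃⟩
      · exact ⟨m, him, hmj, fun h' => h (h' ▸ hm)⟩
    obtain ⟨x, ⟨hix, hxj, hx⟩, hmin⟩ : ∃ x, (i.1 < x ∧ x < j.1 ∧ s x ≠ s (i + 1)) ∧
        ∀ y < x, ¬ (i.1 < y ∧ y < j.1 ∧ s y ≠ s (i + 1)) :=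
      ⟨Nat.find hex, Nat.find_spec hex, fun _ => Nat.find_min hex⟩
    have hix' : i.1 + 1 < x := by
      rcases Nat.lt_or_ge (i.1 + 1) x with h | h
      · exact h
      · exact absurd (by rw [show x = i.1 + 1 by omega]) hx
    obtain ⟨y, hyx, hys, hy, hyadj⟩ :=
      exists_last_on_side (n := n) h₀₁ (k := ⟨x, by omega⟩) (by simp only; omega) (s x)
    obtain ⟨p, hpj, hps, hp, hpadj⟩ :=
      exists_last_on_side (n := n) h₀₁ (k := j) (by omega) (s (i + 1))
    obtain ⟨q, hqj, hqs, hq, hqadj⟩ := exists_last_on_side (n := n) h₀₁ (k := j) (by omega) (s x)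
    rw [Fin.lt_def] at hyx hpj hqj hij
    simp only at hyx hy
    have hp' : i.1 < p.1 := by
      by_contra h
      exact hp (i + 1) (by omega) (by omega) rfl
    have hq' : i.1 < q.1 := by
      by_contra h
      exact hq x (by omega) (by omega) rfl
    have hy' : y.1 ≤ i.1 := by
      by_contra h
      exact hmin y hyx ⟨by omega, by omega, hys ▸ hx⟩
    have chain : ∀ r : Fin n, i < r → (∀ v : Fin n, i < v → v < r → s v ≠ s r) → r < j →
        (G.induce {v | i < v ∧ v < j ∧ s v = s r}).Connected := by
      intro r hir hr hrj
      refine connected_induce_of_descending (r := r) ⟨hir, hrj, rfl⟩ ?_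
      rintro v ⟨hiv, hvj, hv⟩ hne
      have hrv : r < v := lt_of_le_of_ne (not_lt.1 fun h => hr v hiv h hv) (Ne.symm hne)
      obtain ⟨w, hwv, hws, hw, hwadj⟩ := exists_last_on_side (n := n) h₀₁ (k := v)
        (by rw [Fin.lt_def] at *; omega) (s v)
      have hrw : r ≤ w := not_lt.1 fun h => hw r h hrv hv.symm
      exact ⟨w, ⟨hir.trans_le hrw, hwv.trans hvj, hws.trans hv⟩, hwv, hG hwadj⟩
    refine hasMinor_completeGraph_four (A := {v | v ≤ i}) (B := {j})
      (C := {v | i < v ∧ v < j ∧ s v = s (i + 1)}) (D := {v | i < v ∧ v < j ∧ s v = s x})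
      ?_ (single j) (chain ⟨i + 1, hi'⟩ ?_ ?_ ?_) (chain ⟨x, by omega⟩ ?_ ?_ ?_)
      ?_ ?_ ?_ ?_ ?_ ?_ ?_ ?_ ?_ ?_ ?_ ?_
    · refine connected_induce_of_descending (r := ⟨0, by omega⟩) (Nat.zero_le _) ?_
      intro v hv hne
      have hv0 : v.1 ≠ 0 := fun h => hne (Fin.ext h)
      simp only [Set.mem_ofPred_eq, Fin.le_def] at hv
      refine ⟨⟨v - 1, by omega⟩, ?_, ?_, hG (strip_adj_succ ?_)⟩ <;>
        simp only [Set.mem_ofPred_eq, Fin.le_def, Fin.lt_def] <;> omega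
    · simp only [Fin.lt_def]; omega
    · intro v h₁ h₂
      simp only [Fin.lt_def] at h₁ h₂
      omega
    · simp only [Fin.lt_def]; omega
    · simp only [Fin.lt_def]; omega
    · intro v h₁ h₂ h₃
      exact hmin v h₂ ⟨h₁, lt_trans h₂ hxj, h₃ ▸ hx⟩
    · exact hxj
    · exact Set.disjoint_singleton_right.2 fun h => by
        simp only [Set.mem_ofPred_eq, Fin.le_def] at h
        omega
    · exact Set.disjoint_left.2 fun v h₁ h₂ => absurd h₂.1 (not_lt.2 h₁)
    · exact Set.disjoint_left.2 fun v h₁ h₂ => absurd h₂.1 (not_lt.2 h₁)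
    · exact Set.disjoint_singleton_left.2 fun h => lt_irrefl _ h.2.1
    · exact Set.disjoint_singleton_left.2 fun h => lt_irrefl _ h.2.1
    · exact Set.disjoint_left.2 fun v h₁ h₂ => hx (h₂.2.2.symm.trans h₁.2.2)
    · exact ⟨i, le_refl i, j, rfl, hGij⟩
    · exact ⟨i, le_refl i, ⟨i + 1, hi'⟩, ⟨Nat.lt_succ_self _, by simp only [Fin.lt_def]; omega, rfl⟩,
        hG (strip_adj_succ rfl)⟩
    · exact ⟨y, hy', ⟨x, by omega⟩, ⟨hix, hxj, rfl⟩, hG hyadj⟩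
    · exact ⟨j, rfl, p, ⟨hp', hpj, hps⟩, (hG hpadj).symm⟩
    · exact ⟨j, rfl, q, ⟨hq', hqj, hqs⟩, (hG hqadj).symm⟩
    · have hx1 : s (x - 1) = s (i + 1) := by
        by_contra h
        exact hmin (x - 1) (by omega) ⟨by omega, by omega, h⟩
      refine ⟨⟨x - 1, by omega⟩, ⟨?_, ?_, hx1⟩, ⟨x, by omega⟩, ⟨hix, hxj, rfl⟩,
        hG (strip_adj_succ ?_)⟩ <;> simp only [Fin.lt_def] <;> omega
  · push Not at hopp
    obtain ⟨t, htj, hts, ht, htadj⟩ := exists_last_on_side (n := n) h₀₁ (k := j) (by omega) (!s i)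
    rw [Fin.lt_def] at htj hij
    have hti : t.1 < i.1 := by
      by_contra h
      rcases Nat.lt_or_ge i.1 t.1 with h' | h'
      · simp [hopp t h' htj] at hts
      · simp [show t = i from Fin.ext (by omega)] at hts
    have hub : ∀ v : Fin n, t < v → v ≤ j → G.Adj t v := fun v h₁ h₂ =>
      hG ((strip_adj_of_lt h₁).2 fun m h₃ h₄ => hts ▸ ht m h₃ (lt_of_lt_of_le h₄ h₂))
    refine hasMinor_completeGraph_four (A := {t}) (B := {i}) (C := {v | i < v ∧ v < j}) (D := {j})
      (single t) (single i) ?_ (single j) ?_ ?_ ?_ ?_ ?_ ?_ ?_ ?_ ?_ ?_ ?_ ?_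
    · refine connected_induce_of_descending (r := ⟨i + 1, hi'⟩)
        ⟨Nat.lt_succ_self _, by simp only [Fin.lt_def]; omega⟩ ?_
      rintro v ⟨h₁, h₂⟩ hne
      have hne' : v.1 ≠ i.1 + 1 := fun h => hne (Fin.ext h)
      simp only [Fin.lt_def] at h₁ h₂
      refine ⟨⟨v - 1, by omega⟩, ⟨?_, ?_⟩, ?_, hG (strip_adj_succ ?_)⟩ <;>
        simp only [Fin.lt_def] <;> omega
    · simpa [Fin.ext_iff] using by omega
    · exact Set.disjoint_singleton_left.2 fun h => hti.asymm h.1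
    · simpa [Fin.ext_iff] using by omega
    · exact Set.disjoint_singleton_left.2 fun h => lt_irrefl _ h.1
    · simpa [Fin.ext_iff] using by omega
    · exact Set.disjoint_singleton_right.2 fun h => lt_irrefl _ h.2
    · exact ⟨t, rfl, i, rfl, hub i hti hij.le⟩
    · exact ⟨t, rfl, ⟨m, by omega⟩, ⟨him, hmj⟩, hub _ (hti.trans him) hmj.le⟩
    · exact ⟨t, rfl, j, rfl, hub j htj le_rfl⟩
    · exact ⟨i, rfl, ⟨i + 1, hi'⟩, ⟨Nat.lt_succ_self _, by simp only [Fin.lt_def]; omega⟩,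
        hG (strip_adj_succ rfl)⟩
    · exact ⟨i, rfl, j, rfl, hGij⟩
    · refine ⟨⟨j - 1, by omega⟩, ⟨?_, ?_⟩, j, rfl, hG (strip_adj_succ ?_)⟩ <;>
        simp only [Fin.lt_def] <;> omega

theorem strip_isMaxOuterplanar (h₀₁ : s 0 ≠ s 1) : IsMaxOuterplanar (strip s n) := by
  refine ⟨strip_isOuterplanar, fun a b hab hadj h => h.1 ?_⟩
  have hG : (strip s n ⊔ fromEdgeSet {s(a, b)}).Adj a b := by simp [hab]
  rcases lt_or_gt_of_ne hab with h | h
  · exact hasMinor_of_strip_le h₀₁ le_sup_left h hadj hG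
  · exact hasMinor_of_strip_le h₀₁ le_sup_left h (fun h' => hadj h'.symm) hG.symm

theorem ncard_ne_two_of_mem {α : Type*} [Finite α] {S : Set α} (a b c : α) (ha : a ∈ S)
    (hb : b ∈ S) (hc : c ∈ S) (hab : a ≠ b) (hac : a ≠ c) (hbc : b ≠ c) : S.ncard ≠ 2 := by
  have := (Set.two_lt_ncard_iff (Set.toFinite S)).2 ⟨a, b, c, ha, hb, hc, hab, hac, hbc⟩
  omega

theorem strip_eq_of_adj_of_adj {u v w : Fin n} (huv : u < v) (hvw : v < w)
    (huw : (strip s n).Adj u w) (hvw' : (strip s n).Adj v w) : v.1 + 1 = w.1 := by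
  rw [strip_adj_of_lt hvw] at hvw'
  rw [strip_adj_of_lt (huv.trans hvw)] at huw
  rw [Fin.lt_def] at huv hvw
  by_contra h
  have h₁ := hvw' (v + 1) (by omega) (by omega)
  have h₂ := huw (v + 1) (by omega) (by omega)
  have h₃ := huw v huv hvw
  generalize s (v + 1) = x at *
  cases x <;> simp_all

theorem exists_adj_lt_pred (h₀₁ : s 0 ≠ s 1) {k : Fin n} (hk : 2 ≤ k.1) :
    ∃ i : Fin n, i.1 + 1 < k.1 ∧ (strip s n).Adj i k := by
  obtain ⟨i, hi, his, -, hadj⟩ := exists_last_on_side h₀₁ hk (!s (k - 1))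
  refine ⟨i, ?_, hadj⟩
  rw [Fin.lt_def] at hi
  by_contra h
  simp [show i.1 = k.1 - 1 by omega] at his

theorem strip_neighborSet_zero (h₀₁ : s 0 ≠ s 1) (h₀₂ : s 2 = s 0) (hn : 3 ≤ n) :
    (strip s n).neighborSet ⟨0, by omega⟩ = {⟨1, by omega⟩, ⟨2, by omega⟩} := by
  ext v
  simp only [mem_neighborSet, Set.mem_insert_iff, Set.mem_singleton_iff, Fin.ext_iff]
  rcases Nat.eq_zero_or_pos v.1 with h | h
  · rw [show v = ⟨0, by omega⟩ from Fin.ext h]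
    simp
  · rw [strip_adj_of_lt (Fin.lt_def.2 h)]
    constructor
    · intro h'
      by_contra h''
      exact h' 2 (by simp) (by omega) h₀₂
    · intro h' m h₁ h₂
      have : m = 1 := by simp only at h₁; omega
      subst this
      exact h₀₁.symm

theorem strip_degree_two (h₀₁ : s 0 ≠ s 1) (h₀₂ : s 2 = s 0) (hn : 4 ≤ n) :
    {v | ((strip s n).neighborSet v).ncard = 2} = {⟨0, by omega⟩, ⟨n - 1, by omega⟩} := by
  ext v
  simp only [Set.mem_ofPred_eq, Set.mem_insert_iff, Set.mem_singleton_iff]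
  constructor
  · intro h
    by_contra hv
    simp only [Fin.ext_iff, not_or] at hv
    have hsucc : (strip s n).Adj v ⟨v + 1, by omega⟩ := strip_adj_succ rfl
    have hpred : (strip s n).Adj v ⟨v - 1, by omega⟩ :=
      (strip_adj_succ (by simp only; omega)).symm
    obtain ⟨u, hu, hu'⟩ : ∃ u : Fin n, (u.1 + 1 < v.1 ∨ v.1 + 1 < u.1) ∧
        (strip s n).Adj v u := by
      rcases Nat.lt_or_ge v.1 2 with h' | h'
      · refine ⟨⟨3, by omega⟩, .inr (by simp only; omega), (strip_adj_of_lt ?_).2 ?_⟩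
        · simp only [Fin.lt_def]
          omega
        · intro m h₁ h₂
          rw [show m = 2 by simp only at h₂; omega, show v.1 = 1 by omega, h₀₂]
          exact h₀₁
      · obtain ⟨u, hu, hu'⟩ := exists_adj_lt_pred h₀₁ h'
        exact ⟨u, .inl hu, hu'.symm⟩
    refine ncard_ne_two_of_mem ⟨v + 1, by omega⟩ ⟨v - 1, by omega⟩ u hsucc hpred hu' ?_ ?_ ?_ h <;>
      simp only [ne_eq, Fin.ext_iff] <;> omega
  · rintro (rfl | rfl)
    · rw [strip_neighborSet_zero h₀₁ h₀₂ (by omega), Set.ncard_pair (by simp)]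
    · obtain ⟨u, hu, hadj⟩ := exists_adj_lt_pred (n := n) h₀₁ (k := ⟨n - 1, by omega⟩)
        (by simp only; omega)
      simp only at hu
      have : (strip s n).neighborSet ⟨n - 1, by omega⟩ = {u, ⟨n - 2, by omega⟩} := by
        ext w
        simp only [mem_neighborSet, Set.mem_insert_iff, Set.mem_singleton_iff]
        constructor
        · intro hw
          by_contra hne
          simp only [Fin.ext_iff, not_or] at hne
          have hw' : w.1 ≠ n - 1 := fun h => hw.ne (Fin.ext h.symm)
          rcases lt_or_gt_of_ne hne.1 with h | h
          · have := strip_eq_of_adj_of_adj h (by simp only [Fin.lt_def]; omega) hw.symm hadj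
            simp only at this
            omega
          · have := strip_eq_of_adj_of_adj h (by simp only [Fin.lt_def]; omega) hadj hw.symm
            simp only at this
            omega
        · rintro (rfl | rfl)
          · exact hadj.symm
          · exact (strip_adj_succ (by simp only; omega)).symm
      rw [this, Set.ncard_pair]
      simp only [ne_eq, Fin.ext_iff]
      omega

theorem strip_isPathLike (h₀₁ : s 0 ≠ s 1) (h₀₂ : s 2 = s 0) (hn : 4 ≤ n) :
    IsPathLike (strip s n) := by
  refine ⟨strip_isMaxOuterplanar h₀₁, ?_⟩
  rw [strip_degree_two h₀₁ h₀₂ hn, Set.ncard_pair]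
  simp only [ne_eq, Fin.ext_iff]
  omega

/-- An isomorphism of strips fixing the first two vertices fixes all of them. -/
theorem strip_iso_apply {s' : ℕ → Bool} (h₀₁ : s 0 ≠ s 1) (e : strip s n ≃g strip s' n)
    (he : ∀ i : Fin n, i.1 < 2 → e i = i) (i : Fin n) : e i = i := by
  induction i using WellFoundedLT.induction with
  | ind k ih =>
    rcases Nat.lt_or_ge k.1 2 with hk | hk
    · exact he k hk
    · obtain ⟨u, hu, hadj⟩ := exists_adj_lt_pred h₀₁ hk
      have hpred : (strip s n).Adj ⟨k - 1, by omega⟩ k := strip_adj_succ (by simp only; omega)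
      have huk : u < k := Fin.lt_def.2 (by omega)
      have hpk : (⟨k - 1, by omega⟩ : Fin n) < k := Fin.lt_def.2 (by simp only; omega)
      have hge : k ≤ e k := not_lt.1 fun h => h.ne (e.injective (ih _ h))
      rw [← e.map_adj_iff, ih _ huk] at hadj
      rw [← e.map_adj_iff, ih _ hpk] at hpred
      have := strip_eq_of_adj_of_adj (Fin.lt_def.2 (by simp only; omega)) (hpk.trans_le hge)
        hadj hpred
      ext
      simp only at this
      omega

theorem strip_iso_fix_one {s' : ℕ → Bool} (h₀₁ : s 0 ≠ s 1) (h₀₂ : s 2 = s 0) (h₁₃ : s 3 = s 1)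
    (h₀₁' : s' 0 ≠ s' 1) (h₀₂' : s' 2 = s' 0) (h₁₃' : s' 3 = s' 1) (hn : 5 ≤ n)
    (e : strip s n ≃g strip s' n) (he : e ⟨0, by omega⟩ = ⟨0, by omega⟩) :
    e ⟨1, by omega⟩ = ⟨1, by omega⟩ := by
  have nbr₀ : ∀ v, (strip s n).Adj ⟨0, by omega⟩ v →
      e v = ⟨1, by omega⟩ ∨ e v = ⟨2, by omega⟩ := by
    intro v hv
    rw [← e.map_adj_iff, he, ← mem_neighborSet, strip_neighborSet_zero h₀₁' h₀₂' (by omega)] at hv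
    exact hv
  have nbr₁ : ∀ v, (strip s' n).Adj ⟨1, by omega⟩ v → v.1 ≤ 3 := by
    intro v hv
    by_contra h
    rw [strip_adj_of_lt (Fin.lt_def.2 (by simp only; omega))] at hv
    exact hv 3 (by simp) (by omega) h₁₃'
  have adj₀ : ∀ v ∈ ({⟨1, by omega⟩, ⟨2, by omega⟩} : Set (Fin n)),
      (strip s n).Adj ⟨0, by omega⟩ v := by
    intro v hv
    rwa [← mem_neighborSet, strip_neighborSet_zero h₀₁ h₀₂ (by omega)]
  refine (nbr₀ _ (adj₀ _ (.inl rfl))).resolve_right fun h₁ => ?_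
  have h₂ : e ⟨2, by omega⟩ = ⟨1, by omega⟩ :=
    (nbr₀ _ (adj₀ _ (.inr rfl))).resolve_right fun h => by
      simpa using e.injective (h₁.trans h.symm)
  have adj₃ : (strip s n).Adj ⟨2, by omega⟩ ⟨3, by omega⟩ := strip_adj_succ rfl
  have adj₄ : (strip s n).Adj ⟨2, by omega⟩ ⟨4, by omega⟩ := by
    rw [strip_adj_of_lt (Fin.lt_def.2 (by simp))]
    intro m h₃ h₄
    rw [show m = 3 by simp only at h₃ h₄; omega, h₁₃, h₀₂]
    exact h₀₁.symm
  rw [← e.map_adj_iff, h₂] at adj₃ adj₄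
  have h₃ := nbr₁ _ adj₃
  have h₄ := nbr₁ _ adj₄
  have ne : ∀ {i j : Fin n}, i.1 ≠ j.1 → (e i).1 ≠ (e j).1 := fun hij h =>
    hij (congrArg _ (e.injective (Fin.ext h)))
  have n₀₃ := ne (i := ⟨0, by omega⟩) (j := ⟨3, by omega⟩) (by simp)
  have n₀₄ := ne (i := ⟨0, by omega⟩) (j := ⟨4, by omega⟩) (by simp)
  have n₁₃ := ne (i := ⟨1, by omega⟩) (j := ⟨3, by omega⟩) (by simp)
  have n₁₄ := ne (i := ⟨1, by omega⟩) (j := ⟨4, by omega⟩) (by simp)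
  have n₂₃ := ne (i := ⟨2, by omega⟩) (j := ⟨3, by omega⟩) (by simp)
  have n₂₄ := ne (i := ⟨2, by omega⟩) (j := ⟨4, by omega⟩) (by simp)
  have n₃₄ := ne (i := ⟨3, by omega⟩) (j := ⟨4, by omega⟩) (by simp)
  simp only [he, h₁, h₂] at n₀₃ n₀₄ n₁₃ n₁₄ n₂₃ n₂₄
  omega

/-- A strip is determined, up to swapping sides, on all vertices but the last. -/
theorem side_eq_of_strip_eq {s' : ℕ → Bool} (h : strip s n = strip s' n) (h₀ : s 0 = s' 0)
    (k : ℕ) (hk : k + 1 < n) : s k = s' k := by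
  induction k with
  | zero => exact h₀
  | succ k ih =>
    have hadj : (strip s n).Adj ⟨k, by omega⟩ ⟨k + 2, hk⟩ ↔
        (strip s' n).Adj ⟨k, by omega⟩ ⟨k + 2, hk⟩ := by rw [h]
    have mid : ∀ t : ℕ → Bool,
        (strip t n).Adj ⟨k, by omega⟩ ⟨k + 2, hk⟩ ↔ t (k + 1) ≠ t k := by
      intro t
      rw [strip_adj_of_lt (Fin.lt_def.2 (by simp only; omega))]
      constructor
      · exact fun h => h (k + 1) (by simp) (by simp)
      · intro h m h₁ h₂
        rwa [show m = k + 1 by simp only at h₁ h₂; omega]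
    rw [mid, mid, ih (by omega)] at hadj
    generalize s' k = x at *
    generalize s (k + 1) = y at *
    generalize s' (k + 1) = z at *
    cases x <;> cases y <;> cases z <;> simp_all

/-- The sides that start by alternating four times and then follow `b`. -/
def sideOfBits {m : ℕ} (b : Fin m → Bool) (k : ℕ) : Bool :=
  if k < 4 then decide (k % 2 = 1) else if h : k - 4 < m then b ⟨k - 4, h⟩ else false

/-- The strip on the sides given by `b`, with its initial ear. -/
def stripWithEar (hn : 6 ≤ n) (b : Fin (n - 5) → Bool) :
    {p : SimpleGraph (Fin n) × Fin n // IsPathLike p.1 ∧ (p.1.neighborSet p.2).ncard = 2} :=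
  ⟨(strip (sideOfBits b) n, ⟨0, by omega⟩),
    strip_isPathLike (by simp [sideOfBits]) (by simp [sideOfBits]) (by omega), by
    rw [strip_neighborSet_zero (by simp [sideOfBits]) (by simp [sideOfBits]) (by omega),
      Set.ncard_pair (by simp)]⟩

theorem stripWithEar_injective (hn : 6 ≤ n) :
    Function.Injective fun b => Quotient.mk (earSetoid n) (stripWithEar hn b) := by
  intro b b' h
  obtain ⟨e, he⟩ := Quotient.exact h
  change strip (sideOfBits b) n ≃g strip (sideOfBits b') n at e
  change e ⟨0, by omega⟩ = ⟨0, by omega⟩ at he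
  have he₁ : e ⟨1, by omega⟩ = ⟨1, by omega⟩ :=
    strip_iso_fix_one (by simp [sideOfBits]) (by simp [sideOfBits]) (by simp [sideOfBits])
      (by simp [sideOfBits]) (by simp [sideOfBits]) (by simp [sideOfBits]) (by omega) e he
  have hid := strip_iso_apply (by simp [sideOfBits]) e fun i hi => by
    rcases Nat.eq_zero_or_pos i.1 with h₀ | h₀
    · rw [show i = ⟨0, by omega⟩ from Fin.ext h₀, he]
    · rw [show i = ⟨1, by omega⟩ from Fin.ext (by simp only; omega), he₁]
  have heq : strip (sideOfBits b) n = strip (sideOfBits b') n := by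
    ext i j
    rw [← e.map_adj_iff, hid, hid]
  funext i
  have hi := side_eq_of_strip_eq heq (by simp [sideOfBits]) (i + 4) (by omega)
  simpa [sideOfBits] using hi

end Strip

end SimpleGraph

/-- For `n ≥ 6`, there are at least `2^(n−5)` isomorphism classes of pairs `(H, Δ)` where `H`
is an `n`-vertex path-like maximal outerplanar graph and `Δ` is an ear of `H`. -/
theorem pathlike_ear_pairs_count (n : ℕ) (hn : 6 ≤ n) :
    2 ^ (n - 5) ≤ Nat.card (Quotient (earSetoid n)) := by
  have : Finite (Quotient (earSetoid n)) := Quotient.finite _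
  simpa using Nat.card_le_card_of_injective _ (stripWithEar_injective hn)
end

section
/- Let T be a finite tree and v a vertex of T. Then there exists a path P in T starting at v such that every connected component of T − V(P) has at most (|V(T)| − 1)/2 vertices. -/
open SimpleGraph

namespace SimpleGraph

variable {V : Type*} {G : SimpleGraph V}

/-- If a walk ends in `w` and otherwise only meets `w` and `A`, then the component of its starting
point in the subgraph induced on `A` contains a neighbour of `w`. -/
lemma Walk.exists_adj_reachable_induce {A : Set V} {y w : V} (p : G.Walk y w) (hw : w ∉ A)
    (hy : y ∈ A) (hp : ∀ x ∈ p.support, x = w ∨ x ∈ A) :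
    ∃ x : A, G.Adj w x ∧ (G.induce A).Reachable ⟨y, hy⟩ x := by
  induction p with
  | nil => exact absurd hy hw
  | @cons y z w h p ih =>
    have hz : z = w ∨ z ∈ A := hp z (by simp)
    rcases hz with rfl | hz
    · exact ⟨⟨y, hy⟩, h.symm, Reachable.rfl⟩
    · obtain ⟨x, hx, hr⟩ := ih hw hz fun x hx => hp x (by simp [hx])
      exact ⟨x, hx, (Adj.reachable (show (G.induce A).Adj ⟨y, hy⟩ ⟨z, hz⟩ from h)).trans hr⟩

/-- Two components which together have more vertices than the graph coincide. -/
lemma ConnectedComponent.eq_of_card_lt_ncard_add_ncard [Finite V] {c d : G.ConnectedComponent}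
    (h : Nat.card V < c.supp.ncard + d.supp.ncard) : c = d := by
  by_contra hne
  have hd : Disjoint c.supp d.supp := G.pairwise_disjoint_supp_connectedComponent hne
  rw [← Set.ncard_union_eq hd] at h
  exact h.not_ge (Set.ncard_le_card _)

/-- In passing from an induced subgraph to a larger one, components do not shrink. -/
lemma ConnectedComponent.ncard_supp_le_map_induceHomOfLE [Finite V] {A B : Set V} (h : A ≤ B)
    (c : (G.induce A).ConnectedComponent) :
    c.supp.ncard ≤ (c.map (G.induceHomOfLE h).toHom).supp.ncard := by
  refine Set.ncard_le_ncard_of_injOn (G.induceHomOfLE h) ?_ (G.induceHomOfLE h).injective.injOn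
  rintro a rfl
  rfl

/-- A path whose endpoint has a neighbour in every large component of the rest of the graph
extends to a path leaving only small components. -/
lemma Walk.IsPath.exists_forall_ncard_supp_le [Fintype V] {v u : V} (p : G.Walk v u)
    (hp : p.IsPath)
    (hlarge : ∀ c : (G.induce {x : V | x ∉ p.support}).ConnectedComponent,
      Fintype.card V - 1 < 2 * c.supp.ncard → ∃ x ∈ c.supp, G.Adj u x) :
    ∃ (u' : V) (q : G.Walk v u'), q.IsPath ∧
      ∀ c : (G.induce {x : V | x ∉ q.support}).ConnectedComponent,
        2 * c.supp.ncard ≤ Fintype.card V - 1 := by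
  by_cases hsmall : ∀ c : (G.induce {x : V | x ∉ p.support}).ConnectedComponent,
      2 * c.supp.ncard ≤ Fintype.card V - 1
  · exact ⟨u, p, hp, hsmall⟩
  push Not at hsmall
  obtain ⟨c, hc⟩ := hsmall
  obtain ⟨w, hwc, hadj⟩ := hlarge c hc
  have hq : (p.concat hadj).IsPath := hp.concat w.2 hadj
  have hlt := hq.length_lt
  have hle : {x : V | x ∉ (p.concat hadj).support} ≤ {x : V | x ∉ p.support} := by
    intro x hx
    simp_all [support_concat]
  refine Walk.IsPath.exists_forall_ncard_supp_le (p.concat hadj) hq fun c' hc' => ?_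
  have hcard : Nat.card {x : V | x ∉ p.support} < Fintype.card V := by
    rw [← Nat.card_eq_fintype_card]
    exact Finite.card_subtype_lt (x := u) (by simp)
  have hcc : c = c'.map (G.induceHomOfLE hle).toHom :=
    ConnectedComponent.eq_of_card_lt_ncard_add_ncard (by
      have := c'.ncard_supp_le_map_induceHomOfLE hle
      omega)
  obtain ⟨y, rfl⟩ := c'.exists_rep
  have hyw : (G.induce {x : V | x ∉ p.support}).Reachable (G.induceHomOfLE hle y) w :=
    ConnectedComponent.exact ((hwc.trans hcc).symm)
  obtain ⟨r⟩ := hyw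
  obtain ⟨x, hx, hyx⟩ := (r.map (Embedding.induce _).toHom).exists_adj_reachable_induce
    (A := {x : V | x ∉ (p.concat hadj).support}) (by simp) y.2 (by
      intro x hx
      rw [Walk.support_map, List.mem_map] at hx
      obtain ⟨a, -, rfl⟩ := hx
      have := a.2
      simp only [Set.mem_ofPred_eq] at this
      by_cases h : (a : V) = w <;> simp_all [support_concat])
  exact ⟨x, ConnectedComponent.sound hyx.symm, hx⟩
termination_by Fintype.card V - p.length
decreasing_by simp only [length_concat] at hlt ⊢; omega

/-- The Gyárfás path argument: it only uses connectedness. -/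
lemma Connected.exists_isPath_forall_ncard_supp_le [Fintype V] (hG : G.Connected) (v : V) :
    ∃ (u : V) (p : G.Walk v u), p.IsPath ∧
      ∀ c : (G.induce {x : V | x ∉ p.support}).ConnectedComponent,
        2 * c.supp.ncard ≤ Fintype.card V - 1 := by
  refine Walk.IsPath.exists_forall_ncard_supp_le (Walk.nil : G.Walk v v) Walk.IsPath.nil
    fun c _ => ?_
  obtain ⟨y, rfl⟩ := c.exists_rep
  obtain ⟨r⟩ := hG.preconnected y v
  obtain ⟨x, hx, hyx⟩ := r.exists_adj_reachable_induce
    (A := {x : V | x ∉ (Walk.nil : G.Walk v v).support}) (by simp) y.2 (by simp [em])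
  exact ⟨x, ConnectedComponent.sound hyx.symm, hx⟩

end SimpleGraph

/-- **Gyárfás path.** For every finite tree `T` and vertex `v`, there is a path `P` starting
at `v` such that every connected component of `T − V(P)` has at most `(|V(T)| − 1) / 2`
vertices. -/
theorem exists_gyarfas_path {V : Type*} [Fintype V] (T : SimpleGraph V)
    (hT : T.IsTree) (v : V) :
    ∃ (u : V) (p : T.Walk v u), p.IsPath ∧
      ∀ c : (T.induce {x : V | x ∉ p.support}).ConnectedComponent,
        2 * c.supp.ncard ≤ Fintype.card V - 1 :=
  hT.connected.exists_isPath_forall_ncard_supp_le v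
end
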